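/- arXiv:1604.02947 — 2 statements merged into one kernel-verified Lean document; each statement's English description precedes it below -/
import Mathlib

section
/- Let X be a pure d-dimensional α-skeleton expander, 0 ≤ i < d, 0 < η < 1 a fatness constant. Then for every i-cochain W and every 1 ≤ k ≤ i+1, Pr[P_k ∈ F^k(W) and P_{k−2} ∉ S^{k−2}(W)] ≤ (η^(2^(i−k+1)) + α) · Pr[P_{k−1} ∈ S^{k−1}(W) and P_{k−2} ∉ S^{k−2}(W)]. -/
/-!
Write `n = k - 1` for the cardinality of the `(k-2)`-faces. Conditioning on `P_{k-2}`, every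
probability `Pr[P_{j-1} ∈ A ∧ P_{n-1} ∉ B]` becomes the average of `‖A_σ‖_σ` over the faces
`σ ∉ B` of cardinality `n`, where the weight of `σ`, namely `Pr[P_{n-1} = σ]`, does not depend on
`j` (`SC.prNI_eq`; it rests on the double count `SC.sum_deg_above` and on
`Nat.choose_mul`). The theorem therefore reduces to the inequality
`‖F_σ‖_σ ≤ (c + α) ‖S_σ‖_σ` for each single non-fat `σ`, where `F` are the full faces, `S` the fat
`(k-1)`-faces and `c` the fatness threshold. In the link of `σ`, the localization `S_σ` is a set of
vertices and every full face containing `σ` is an edge with both endpoints in `S_σ`. Skeleton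
expansion bounds its norm by `‖S_σ‖_σ (‖S_σ‖_σ + α)`, and `‖S_σ‖_σ < c` because `σ` is not fat.
-/

open Finset

open scoped Classical

noncomputable section

/-- A pure `d`-dimensional simplicial complex on a finite vertex set `V`: a collection of
finite subsets of `V` (the faces), containing the empty face, closed under taking subsets,
in which every face is contained in a face of cardinality `d+1`. -/
structure SC (V : Type) [DecidableEq V] [Fintype V] (d : ℕ) where
  faces : Finset (Finset V)
  empty_mem : ∅ ∈ faces
  down_closed : ∀ σ ∈ faces, ∀ τ ⊆ σ, τ ∈ faces
  pure : ∀ σ ∈ faces, ∃ τ ∈ faces, σ ⊆ τ ∧ τ.card = d + 1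

namespace SC

variable {V : Type} [DecidableEq V] [Fintype V] {d : ℕ}

/-- The faces of cardinality `k`, i.e. the set `X(k-1)` of `(k-1)`-dimensional faces. -/
def fc (X : SC V d) (k : ℕ) : Finset (Finset V) :=
  X.faces.filter fun σ => σ.card = k

/-- The degree of a face: the number of top (`d`-dimensional) faces containing it. -/
def deg (X : SC V d) (σ : Finset V) : ℕ :=
  ((X.fc (d + 1)).filter fun τ => σ ⊆ τ).card

/-- The norm of a set `W` of faces of cardinality `k`:
`‖W‖ = (Σ_{σ∈W} deg σ) / (Σ_{τ∈X(k-1)} deg τ)`. -/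
def norm (X : SC V d) (k : ℕ) (W : Finset (Finset V)) : ℝ :=
  (∑ σ ∈ (X.fc k).filter (· ∈ W), (X.deg σ : ℝ)) / ∑ σ ∈ X.fc k, (X.deg σ : ℝ)

/-- `‖A_σ‖_σ`: the norm, computed inside the link of `σ`, of the localization to the link
of a set `A` of cardinality-`k` faces of `X`.  (The faces of the link of `σ` correspond
bijectively to the faces `ρ ⊇ σ` of `X` via `τ ↦ σ ∪ τ`, and this correspondence
preserves degrees.) -/
def linkNorm (X : SC V d) (σ : Finset V) (k : ℕ) (A : Finset (Finset V)) : ℝ :=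
  (∑ ρ ∈ (X.fc k).filter (fun ρ => σ ⊆ ρ ∧ ρ ∈ A), (X.deg ρ : ℝ)) /
    ∑ ρ ∈ (X.fc k).filter (fun ρ => σ ⊆ ρ), (X.deg ρ : ℝ)

/-- For a set `S` of vertices, the norm `‖·‖_σ` in the link of `σ` of the set of
`(m-1)`-dimensional faces of the link all of whose vertices lie in `S`.
For `m = 1` this is `‖S‖_σ` and for `m = 2` it is `‖E(S)‖_σ`. -/
def linkSubsetNorm (X : SC V d) (σ : Finset V) (m : ℕ) (S : Finset V) : ℝ :=
  (∑ ρ ∈ (X.fc (σ.card + m)).filter (fun ρ => σ ⊆ ρ ∧ ρ \ σ ⊆ S), (X.deg ρ : ℝ)) /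
    ∑ ρ ∈ (X.fc (σ.card + m)).filter (fun ρ => σ ⊆ ρ), (X.deg ρ : ℝ)

/-- `X` is an `α`-skeleton expander: for every face `σ ∈ X` (including `σ = ∅`) and every
set `S` of vertices of the link of `σ`, `‖E(S)‖_σ ≤ ‖S‖_σ (‖S‖_σ + α)`. -/
def IsSkeletonExpander (X : SC V d) (α : ℝ) : Prop :=
  ∀ σ ∈ X.faces, ∀ S : Finset V,
    X.linkSubsetNorm σ 2 S ≤ X.linkSubsetNorm σ 1 S * (X.linkSubsetNorm σ 1 S + α)

/-- The expanding faces `ψ(W)` of a set `W` of cardinality-`k` faces: the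
cardinality-`(k+1)` faces containing both a cardinality-`k` face in `W` and a
cardinality-`k` face not in `W`. -/
def psi (X : SC V d) (k : ℕ) (W : Finset (Finset V)) : Finset (Finset V) :=
  (X.fc (k + 1)).filter fun τ =>
    (∃ σ ⊆ τ, σ.card = k ∧ σ ∈ W) ∧ ∃ σ ⊆ τ, σ.card = k ∧ σ ∉ W

/-- `X` is an `ε`-colorful expander: for every `0 ≤ i < d` and every `i`-cochain `W` with
`0 < ‖W‖ ≤ 1/2`, one has `‖ψ(W)‖/‖W‖ ≥ ε`. -/
def IsColorfulExpander (X : SC V d) (ε : ℝ) : Prop :=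
  ∀ i : ℕ, i < d → ∀ W ⊆ X.fc (i + 1),
    0 < X.norm (i + 1) W → X.norm (i + 1) W ≤ 1 / 2 →
    ε ≤ X.norm (i + 2) (X.psi (i + 1) W) / X.norm (i + 1) W

/-- The container `Γ(W)` of a set `W` of cardinality-`k` faces: the cardinality-`(k+1)`
faces containing at least one cardinality-`k` face of `W`. -/
def container (X : SC V d) (k : ℕ) (W : Finset (Finset V)) : Finset (Finset V) :=
  (X.fc (k + 1)).filter fun τ => ∃ σ ⊆ τ, σ.card = k ∧ σ ∈ W

/-- Fat faces: for an `i`-cochain `W` and fatness constant `η`, `X.fat i W η m` is the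
set `S^{i-m}(W)` of fat faces of dimension `i - m` (so of cardinality `i + 1 - m`);
`m = i + 1` gives `S^{-1}(W)`. -/
def fat (X : SC V d) (i : ℕ) (W : Finset (Finset V)) (η : ℝ) : ℕ → Finset (Finset V)
  | 0 => (X.fc (i + 1)).filter (· ∈ W)
  | m + 1 => (X.fc (i - m)).filter fun σ =>
      η ^ 2 ^ m ≤ X.linkNorm σ (i - m + 1) (fat X i W η m)

/-- Full faces: `X.full i W η j` is `F^j(W)`, the set of cardinality-`(j+1)` faces all of
whose cardinality-`j` subsets lie in `S^{j-1}(W) = X.fat i W η (i + 1 - j)`. -/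
def full (X : SC V d) (i : ℕ) (W : Finset (Finset V)) (η : ℝ) (j : ℕ) :
    Finset (Finset V) :=
  (X.fc (j + 1)).filter fun τ => ∀ σ ⊆ τ, σ.card = j → σ ∈ X.fat i W η (i + 1 - j)

/-- `X.prNI ka kb A B` is the probability `Pr[P_{ka-1} ∈ A ∧ P_{kb-1} ∉ B]` for the chain
`P_d ⊃ P_{d-1} ⊃ ⋯` in which `P_d` is a uniformly random top face and each `P_{l-1}` is
obtained from `P_l` by deleting a uniformly random vertex.  (Given `P_{ka-1} = σ`,
the face `P_{kb-1}` is a uniformly random cardinality-`kb` subset of `σ`, and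
`Pr[P_{ka-1} = σ] = deg σ / Σ_{τ ∈ X(ka-1)} deg τ`.) -/
def prNI (X : SC V d) (ka kb : ℕ) (A B : Finset (Finset V)) : ℝ :=
  (∑ σ ∈ (X.fc ka).filter (· ∈ A),
      (X.deg σ : ℝ) * (((σ.powersetCard kb).filter (· ∉ B)).card : ℝ)) /
    ((ka.choose kb : ℝ) * ∑ σ ∈ X.fc ka, (X.deg σ : ℝ))

end SC

/-! ### Multigraphs, given by symmetric adjacency-count matrices -/

/-- Degree of a vertex in the multigraph with adjacency counts `A`. -/
def mdeg {U : Type} [Fintype U] (A : U → U → ℕ) (v : U) : ℕ := ∑ u, A v u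

/-- The transition matrix `DA` of the random walk on the multigraph `A`. -/
def transition {U : Type} [Fintype U] (A : U → U → ℕ) : Matrix U U ℝ :=
  Matrix.of fun u v => (A u v : ℝ) / (mdeg A u : ℝ)

/-- The normalized adjacency matrix `Ã = D^(1/2) A D^(1/2)`. -/
def normAdj {U : Type} [Fintype U] (A : U → U → ℕ) : Matrix U U ℝ :=
  Matrix.of fun u v => (A u v : ℝ) / (Real.sqrt (mdeg A u) * Real.sqrt (mdeg A v))

/-- The stationary distribution `π(v) = deg v / Σ_u deg u`. -/
def statDist {U : Type} [Fintype U] (A : U → U → ℕ) (v : U) : ℝ :=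
  (mdeg A v : ℝ) / ∑ u, (mdeg A u : ℝ)

/-- Maximum degree. -/
def dmaxDeg {U : Type} [Fintype U] (A : U → U → ℕ) : ℕ := ⨆ v, mdeg A v

/-- Minimum degree. -/
def dminDeg {U : Type} [Fintype U] (A : U → U → ℕ) : ℕ := ⨅ v, mdeg A v

/-- The random walk on the multigraph `A` is `μ`-rapidly mixing: for every initial
probability distribution `π0` and every `t`, `‖π0 (DA)^t − π‖₂ ≤ √(dmax/dmin) μ^t`. -/
def IsRapidMixing {U : Type} [Fintype U] [DecidableEq U] (A : U → U → ℕ) (μ : ℝ) : Prop :=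
  ∀ π0 : U → ℝ, (∀ v, 0 ≤ π0 v) → ∑ v, π0 v = 1 → ∀ t : ℕ,
    Real.sqrt (∑ v, (Matrix.vecMul π0 (transition A ^ t) v - statDist A v) ^ 2) ≤
      Real.sqrt ((dmaxDeg A : ℝ) / (dminDeg A : ℝ)) * μ ^ t

/-- The lazy version of a multigraph: add `deg v` self-loops at every vertex `v`. -/
def lazy {U : Type} [Fintype U] [DecidableEq U] (A : U → U → ℕ) : U → U → ℕ :=
  fun u v => A u v + if u = v then mdeg A u else 0

/-- `|E(S, S̄)|`: the number of edges with one endpoint in `S` and one in its complement. -/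
def cutEdges {U : Type} [Fintype U] [DecidableEq U] (A : U → U → ℕ) (S : Finset U) : ℝ :=
  ∑ u ∈ S, ∑ v ∈ Sᶜ, (A u v : ℝ)

/-- `vol S = Σ_{v ∈ S} deg v`. -/
def vol {U : Type} [Fintype U] (A : U → U → ℕ) (S : Finset U) : ℝ :=
  ∑ v ∈ S, (mdeg A v : ℝ)

/-- The conductance `Φ(G) = min { |E(S,S̄)|/vol S : ∅ ≠ S, vol S ≤ vol V / 2 }`. -/
def conductance {U : Type} [Fintype U] [DecidableEq U] (A : U → U → ℕ) : ℝ :=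
  sInf { x : ℝ | ∃ S : Finset U, S.Nonempty ∧ vol A S ≤ vol A Finset.univ / 2 ∧
    x = cutEdges A S / vol A S }

/-- `|E(T)|`: the number of edges with both endpoints in `T`. -/
def edgesWithin {U : Type} [Fintype U] (A : U → U → ℕ) (T : Finset U) : ℝ :=
  ((∑ u ∈ T, ∑ v ∈ T, (A u v : ℝ)) + ∑ v ∈ T, (A v v : ℝ)) / 2

/-- The bipartiteness ratio
`β(G) = min {(|E(S,S̄)| + 2(|E(S1)| + |E(S2)|))/vol S : S = S1 ⊔ S2 ≠ ∅}`. -/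
def bipRatio {U : Type} [Fintype U] [DecidableEq U] (A : U → U → ℕ) : ℝ :=
  sInf { x : ℝ | ∃ S1 S2 : Finset U, (S1 ∪ S2).Nonempty ∧ Disjoint S1 S2 ∧
    x = (cutEdges A (S1 ∪ S2) + 2 * (edgesWithin A S1 + edgesWithin A S2)) /
      vol A (S1 ∪ S2) }

/-- The adjacency counts of the `i`-graph `G_i(X)`: its vertices are the `i`-faces of `X`
(cardinality `i+1`), and two neighboring `i`-faces `σ ∼ τ` (i.e. `σ ∪ τ ∈ X(i+1)`) are
joined by `deg (σ ∪ τ)` parallel edges. -/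
def SC.adjG {V : Type} [DecidableEq V] [Fintype V] {d : ℕ} (X : SC V d) (i : ℕ) :
    {σ // σ ∈ X.fc (i + 1)} → {σ // σ ∈ X.fc (i + 1)} → ℕ :=
  fun σ τ => if σ.1 ∪ τ.1 ∈ X.fc (i + 2) then X.deg (σ.1 ∪ τ.1) else 0

end

namespace SC

section helpers

variable {V : Type} [DecidableEq V] [Fintype V] {d : ℕ}

lemma mem_fc (X : SC V d) {k : ℕ} {σ : Finset V} : σ ∈ X.fc k ↔ σ ∈ X.faces ∧ σ.card = k := by
  simp [fc]

lemma deg_pos (X : SC V d) {σ : Finset V} (h : σ ∈ X.faces) : 0 < X.deg σ := by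
  obtain ⟨τ, hτ, hs, hc⟩ := X.pure σ h
  exact Finset.card_pos.2 ⟨τ, by simp [mem_fc, hτ, hs, hc]⟩

lemma card_between {σ τ : Finset V} (h : σ ⊆ τ) {j : ℕ} (hj : σ.card ≤ j) :
    ((τ.powersetCard j).filter fun ρ => σ ⊆ ρ).card =
      (τ.card - σ.card).choose (j - σ.card) := by
  rw [← Finset.card_sdiff_of_subset h, ← Finset.card_powersetCard]
  refine Finset.card_nbij' (fun ρ => ρ \ σ) (fun ρ => ρ ∪ σ) ?_ ?_ ?_ ?_
  · intro ρ hρ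
    simp only [Finset.coe_filter, Finset.mem_powersetCard, Set.mem_ofPred_eq, Finset.mem_coe] at hρ ⊢
    refine ⟨Finset.sdiff_subset_sdiff hρ.1.1 subset_rfl, ?_⟩
    rw [Finset.card_sdiff_of_subset hρ.2, hρ.1.2]
  · intro ρ hρ
    simp only [Finset.coe_filter, Finset.mem_powersetCard, Set.mem_ofPred_eq, Finset.mem_coe] at hρ ⊢
    have hd : Disjoint ρ σ := Finset.disjoint_of_subset_left hρ.1 Finset.sdiff_disjoint
    refine ⟨⟨Finset.union_subset (hρ.1.trans Finset.sdiff_subset) h, ?_⟩,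
      Finset.subset_union_right⟩
    rw [Finset.card_union_of_disjoint hd, hρ.2]
    omega
  · intro ρ hρ
    simp only [Finset.coe_filter, Set.mem_ofPred_eq] at hρ
    exact Finset.sdiff_union_of_subset hρ.2
  · intro ρ hρ
    simp only [Finset.mem_coe, Finset.mem_powersetCard] at hρ
    have hd : Disjoint ρ σ := Finset.disjoint_of_subset_left hρ.1 Finset.sdiff_disjoint
    exact Finset.union_sdiff_cancel_right hd

/-- Double counting of the pairs `ρ ⊆ τ` with `σ ⊆ ρ`, `|ρ| = j` and `τ` a top face. -/
lemma sum_deg_above (X : SC V d) (σ : Finset V) {j : ℕ} (hj : σ.card ≤ j) :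
    ∑ ρ ∈ (X.fc j).filter (fun ρ => σ ⊆ ρ), X.deg ρ =
      X.deg σ * (d + 1 - σ.card).choose (j - σ.card) := by
  have h1 := Finset.sum_card_bipartiteAbove_eq_sum_card_bipartiteBelow
    (s := (X.fc j).filter (fun ρ => σ ⊆ ρ)) (t := X.fc (d + 1)) (fun ρ τ => ρ ⊆ τ)
  simp only [Finset.bipartiteAbove, Finset.bipartiteBelow] at h1
  unfold deg
  rw [h1, ← smul_eq_mul, ← Finset.sum_const, Finset.sum_filter]
  refine Finset.sum_congr rfl fun τ hτ => ?_
  rw [mem_fc] at hτ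
  split_ifs with h
  · rw [← hτ.2, ← card_between h hj]
    congr 1
    ext ρ
    simp only [Finset.mem_filter, mem_fc, Finset.mem_powersetCard]
    constructor
    · rintro ⟨⟨⟨-, h2⟩, h3⟩, h4⟩
      exact ⟨⟨h4, h2⟩, h3⟩
    · rintro ⟨⟨h4, h2⟩, h3⟩
      exact ⟨⟨⟨X.down_closed τ hτ.1 ρ h4, h2⟩, h3⟩, h4⟩
  · rw [Finset.card_eq_zero, Finset.filter_eq_empty_iff]
    intro ρ hρ h4
    exact h ((Finset.mem_filter.1 hρ).2.trans h4)

lemma sum_deg_fc (X : SC V d) (j : ℕ) :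
    ∑ ρ ∈ X.fc j, X.deg ρ = X.deg ∅ * (d + 1).choose j := by
  have := X.sum_deg_above ∅ (j := j) (by simp)
  simpa using this

/-- Conditioning on the smaller face: the weight `deg σ / (C(d+1,n) deg ∅)` is the probability
that the face of cardinality `n` in the chain is `σ`; it does not depend on `j`. -/
lemma prNI_eq (X : SC V d) {n j : ℕ} (hn : n ≤ j) (hj : j ≤ d + 1) (A B : Finset (Finset V)) :
    X.prNI j n A B = ∑ σ ∈ (X.fc n).filter (· ∉ B),
      X.linkNorm σ j A * ((X.deg σ : ℝ) / ((d + 1).choose n * X.deg ∅)) := by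
  have key : ∑ ρ ∈ (X.fc j).filter (· ∈ A),
        (X.deg ρ : ℝ) * (((ρ.powersetCard n).filter (· ∉ B)).card : ℝ) =
      ∑ σ ∈ (X.fc n).filter (· ∉ B),
        ∑ ρ ∈ (X.fc j).filter (fun ρ => σ ⊆ ρ ∧ ρ ∈ A), (X.deg ρ : ℝ) := by
    have h1 : ∀ ρ ∈ (X.fc j).filter (· ∈ A),
        (X.deg ρ : ℝ) * (((ρ.powersetCard n).filter (· ∉ B)).card : ℝ) =
          ∑ σ ∈ (ρ.powersetCard n).filter (· ∉ B), (X.deg ρ : ℝ) := by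
      intro ρ _
      rw [Finset.sum_const, nsmul_eq_mul, mul_comm]
    rw [Finset.sum_congr rfl h1]
    refine Finset.sum_comm' fun ρ σ => ?_
    simp only [Finset.mem_filter, mem_fc, Finset.mem_powersetCard]
    constructor
    · rintro ⟨⟨h1, h2⟩, ⟨h3, h4⟩, h5⟩
      exact ⟨⟨h1, h3, h2⟩, ⟨X.down_closed ρ h1.1 σ h3, h4⟩, h5⟩
    · rintro ⟨⟨h1, h3, h2⟩, ⟨h6, h4⟩, h5⟩
      exact ⟨⟨h1, h2⟩, ⟨h3, h4⟩, h5⟩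
  unfold prNI
  rw [key, Finset.sum_div]
  refine Finset.sum_congr rfl fun σ hσ => ?_
  simp only [Finset.mem_filter, mem_fc] at hσ
  obtain ⟨⟨hσ, hc⟩, -⟩ := hσ
  unfold linkNorm
  have h2 := X.sum_deg_above σ (j := j) (by omega)
  rw [hc] at h2
  have h2' := congrArg (Nat.cast (R := ℝ)) h2
  have h3' := congrArg (Nat.cast (R := ℝ)) (X.sum_deg_fc j)
  have h4' := congrArg (Nat.cast (R := ℝ)) (Nat.choose_mul (n := d + 1) hn)
  push_cast at h2' h3' h4'
  rw [h2', h3']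
  have p1 : (0 : ℝ) < X.deg σ := by exact_mod_cast X.deg_pos hσ
  have p2 : (0 : ℝ) < X.deg ∅ := by exact_mod_cast X.deg_pos X.empty_mem
  have p3 : (0 : ℝ) < j.choose n := by exact_mod_cast Nat.choose_pos hn
  have p4 : (0 : ℝ) < (d + 1).choose j := by exact_mod_cast Nat.choose_pos hj
  have p5 : (0 : ℝ) < (d + 1).choose n := by exact_mod_cast Nat.choose_pos (hn.trans hj)
  have p6 : (0 : ℝ) < (d + 1 - n).choose (j - n) := by
    exact_mod_cast Nat.choose_pos (by omega)
  rw [div_mul_div_comm, div_eq_div_iff (by positivity) (by positivity)]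
  linear_combination (-(∑ ρ ∈ (X.fc j).filter (fun ρ => σ ⊆ ρ ∧ ρ ∈ A), (X.deg ρ : ℝ)) *
    X.deg σ * X.deg ∅) * h4'

lemma linkNorm_nonneg (X : SC V d) (σ : Finset V) (j : ℕ) (A : Finset (Finset V)) :
    0 ≤ X.linkNorm σ j A := by
  unfold linkNorm
  positivity

/-- The vertices of the link of `σ` forming the localization to it of a set `S` of faces of
cardinality `|σ| + 1`. -/
def locVerts (σ : Finset V) (S : Finset (Finset V)) : Finset V :=
  Finset.univ.filter fun v => v ∉ σ ∧ insert v σ ∈ S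

lemma linkSubsetNorm_one (X : SC V d) (σ : Finset V) (S : Finset (Finset V)) :
    X.linkSubsetNorm σ 1 (locVerts σ S) = X.linkNorm σ (σ.card + 1) S := by
  unfold linkSubsetNorm linkNorm
  congr 1
  refine Finset.sum_congr (Finset.filter_congr fun ρ hρ => ?_) fun _ _ => rfl
  refine and_congr_right fun hs => ?_
  rw [mem_fc] at hρ
  obtain ⟨v, hv, rfl⟩ := Finset.covBy_iff_exists_insert.1
    (Finset.covBy_iff_card_sdiff_eq_one.2 ⟨hs, by
      rw [Finset.card_sdiff_of_subset hs, hρ.2]; omega⟩)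
  rw [Finset.insert_sdiff_cancel hv]
  simp [locVerts, hv]

/-- A face all of whose codimension-one subfaces lie in `S` is, in the link of a codimension-two
subface `σ`, an edge with both endpoints in the localization of `S`. -/
lemma linkNorm_le_of_full (X : SC V d) (σ : Finset V) (S F : Finset (Finset V))
    (hF : ∀ τ ∈ F, ∀ ρ ⊆ τ, ρ.card = σ.card + 1 → ρ ∈ S) :
    X.linkNorm σ (σ.card + 2) F ≤ X.linkSubsetNorm σ 2 (locVerts σ S) := by
  unfold linkSubsetNorm linkNorm
  refine div_le_div_of_nonneg_right ?_ (by positivity)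
  refine Finset.sum_le_sum_of_subset_of_nonneg ?_ fun _ _ _ => by positivity
  intro τ hτ
  simp only [Finset.mem_filter] at hτ ⊢
  refine ⟨hτ.1, hτ.2.1, fun v hv => ?_⟩
  rw [Finset.mem_sdiff] at hv
  simp only [locVerts, Finset.mem_filter, Finset.mem_univ, true_and]
  exact ⟨hv.2, hF τ hτ.2.2 _ (Finset.insert_subset hv.1 hτ.2.1)
    (Finset.card_insert_of_notMem hv.2)⟩

end helpers

end SC

/-- **Full `k`-faces with a non-fat `(k−2)`-face related to fat `(k−1)`-faces with a
non-fat `(k−2)`-face.** For an `α`-skeleton expander `X`, every `i`-cochain `W` and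
`1 ≤ k ≤ i+1`,
`Pr[P_k ∈ F^k(W) ∧ P_{k−2} ∉ S^{k−2}(W)]
  ≤ (η^(2^(i−k+1)) + α) Pr[P_{k−1} ∈ S^{k−1}(W) ∧ P_{k−2} ∉ S^{k−2}(W)]`. -/
theorem statement8 {V : Type} [DecidableEq V] [Fintype V] {d : ℕ} (X : SC V d)
    (α : ℝ) (hα0 : 0 < α) (hX : X.IsSkeletonExpander α)
    (i : ℕ) (hi : i < d) (η : ℝ) (hη0 : 0 < η) (hη1 : η < 1)
    (W : Finset (Finset V)) (hW : W ⊆ X.fc (i + 1))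
    (k : ℕ) (hk1 : 1 ≤ k) (hk : k ≤ i + 1) :
    X.prNI (k + 1) (k - 1) (X.full i W η k) (X.fat i W η (i + 2 - k)) ≤
      (η ^ 2 ^ (i + 1 - k) + α) *
        X.prNI k (k - 1) (X.fat i W η (i + 1 - k)) (X.fat i W η (i + 2 - k)) := by
  obtain ⟨n, rfl⟩ : ∃ n, k = n + 1 := ⟨k - 1, by omega⟩
  obtain ⟨m, rfl⟩ : ∃ m, i = n + m := ⟨i - n, by omega⟩
  have e1 : n + m + 2 - (n + 1) = m + 1 := by omega
  have e2 : n + m + 1 - (n + 1) = m := by omega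
  rw [e1, e2, Nat.add_sub_cancel, X.prNI_eq (by omega) (by omega),
    X.prNI_eq (by omega) (by omega), Finset.mul_sum]
  refine Finset.sum_le_sum fun σ hσ => ?_
  rw [← mul_assoc]
  refine mul_le_mul_of_nonneg_right ?_ (by positivity)
  simp only [Finset.mem_filter, SC.mem_fc] at hσ
  obtain ⟨⟨hσ, hc⟩, hB⟩ := hσ
  -- `σ` is not fat, so the localization of the fat faces to its link has small norm
  have hlt : X.linkNorm σ (n + 1) (X.fat (n + m) W η m) < η ^ 2 ^ m := by
    simpa [SC.fat, SC.mem_fc, hσ, hc] using hB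
  have h1 := X.linkNorm_le_of_full σ (X.fat (n + m) W η m) (X.full (n + m) W η (n + 1)) (by
    intro τ hτ ρ hρ hρc
    have := (Finset.mem_filter.1 hτ).2 ρ hρ (by omega)
    rwa [e2] at this)
  have h2 := hX σ hσ (SC.locVerts σ (X.fat (n + m) W η m))
  rw [X.linkSubsetNorm_one, hc] at h2
  rw [hc] at h1
  have h0 := X.linkNorm_nonneg σ (n + 1) (X.fat (n + m) W η m)
  have h3 := mul_le_mul_of_nonneg_left (add_le_add_left hlt.le α) h0
  rw [mul_comm (η ^ 2 ^ m + α)]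
  exact h1.trans (h2.trans h3)
end

section
/- Let X be a pure d-dimensional α-skeleton expander with d > 1. Then for every 0 ≤ i < d such that α < (2^(1/2^(i+1)) − 1)/√2, the high order random walk on dimension i of X (taken lazy for i = 0) is μ-rapidly mixing for μ = 1 − (1/(2(i+2)²))·((2^(1/2^(i+1)) − 1 − √2·α)/(2√2·(i+1)))^(2(i+1)). -/
/-!
The walk on `G_i` is reversible, so it mixes at rate `μ` as soon as its quadratic form on functions
of mean zero is at most `μ` times the squared norm in absolute value (`contraction`,
`rapidMixing_of_form`). The two sides of this bound are obtained as follows.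

*Upper side.* Skeleton expansion says that in the link of every face of dimension at most `d - 2` a
vertex set carrying at most half of the mass keeps at most a fraction `1/2 + α` of its edge weight
inside (`link_expands`), so the conductance of the link is at least `1/2 - α`. Cheeger's inequality
(`cheeger`) gives every link a spectral gap of at least `λ = (1/2 - α)² / 2`. Local bounds are
turned into a global one by Garland's method: two neighbouring `i`-faces are two adjacent vertices
in the link of their intersection, so summing the link inequalities bounds the form of the walk on
`i`-faces by the norm of `f` and the norm of its average `down f` on `(i-1)`-faces (`garland`). The
latter is controlled by the walk one dimension lower (`down_sq_le`), because averaging down is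
adjoint to averaging up and the square of averaging up is that walk made lazy. Induction on `i`
gives the gap `λ ^ (i + 1) / (i + 1)` (`spectral_gap`).

*Lower side.* The up-down walk is positive semidefinite, which gives the lower bound `-1 / (i + 1)`
for the form of the walk on `G_i` (`pairSum_lower`). This is at least `-1/2` for `i ≥ 1`; for
`i = 0` laziness makes the form nonnegative and halves the gap.

It remains to compare constants (`rate_le`). Since `2 ^ (1 / 2 ^ (i + 1)) ≤ √2`, the hypothesis on
`α` forces `α < 1/2`, and the gap in the theorem is at most half of `λ ^ (i + 1) / (i + 1)`.
-/

open Finset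

open scoped Classical

/-! ### Cheeger's inequality for weighted graphs -/

/-- Discrete coarea inequality: if every superlevel set of `z` expands, then the total
variation of `z` across edges controls its mass. Peels off the lowest layer of the support. -/
lemma coarea {U : Type} [Fintype U] (a : U → U → ℝ) (m : U → ℝ) (h : ℝ) :
    ∀ (n : ℕ) (z : U → ℝ), (∀ v, 0 ≤ z v) → (univ.filter fun v => z v ≠ 0).card = n →
      (∀ S : Finset U, (∀ v ∈ S, z v ≠ 0) →
        2 * h * ∑ v ∈ S, m v ≤
          ∑ u, ∑ v, a u v * |(if u ∈ S then (1 : ℝ) else 0) - if v ∈ S then 1 else 0|) →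
      2 * h * ∑ v, m v * z v ≤ ∑ u, ∑ v, a u v * |z u - z v| := by
  intro n
  induction n using Nat.strong_induction_on with
  | _ n ih =>
  intro z hz hn hS
  set S : Finset U := univ.filter fun v => z v ≠ 0 with hSdef
  rcases S.eq_empty_or_nonempty with he | hne
  · have h0 : ∀ v, z v = 0 := by
      intro v
      by_contra hv
      have : v ∈ S := by simp [hSdef, hv]
      simp [he] at this
    simp [h0]
  obtain ⟨v0, hv0, hmin⟩ := S.exists_min_image z hne
  set t := z v0 with ht
  have hmem : ∀ v, v ∈ S ↔ z v ≠ 0 := by simp [hSdef]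
  have ht0 : 0 < t := lt_of_le_of_ne (hz v0) (Ne.symm ((hmem v0).1 hv0))
  let e : U → ℝ := fun v => if v ∈ S then 1 else 0
  let z' : U → ℝ := fun v => z v - t * e v
  have hz' : ∀ v, 0 ≤ z' v := by
    intro v
    by_cases hv : v ∈ S
    · simpa [z', e, hv] using hmin v hv
    · simpa [z', e, hv] using hz v
  have hsupp : ∀ v, z' v ≠ 0 → z v ≠ 0 := by
    intro v hv
    by_contra h0
    apply hv
    have : v ∉ S := by simp [hmem, h0]
    simp [z', e, this, h0]
  have hlt : (univ.filter fun v => z' v ≠ 0).card < n := by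
    rw [← hn]
    apply Finset.card_lt_card
    refine ⟨fun v hv => ?_, fun hsub => ?_⟩
    · simp only [mem_filter, mem_univ, true_and] at hv
      exact (hmem v).2 (hsupp v hv)
    · have := hsub hv0
      simp [z', e, hv0, ← ht] at this
  have h1 := ih _ hlt z' hz' rfl (fun T hT => hS T fun v hv => hsupp v (hT v hv))
  have h2 := hS S (fun v hv => (hmem v).1 hv)
  have e1 : ∑ v, m v * z v = ∑ v, m v * z' v + t * ∑ v ∈ S, m v := by
    have : ∑ v ∈ S, m v = ∑ v, m v * e v := by simp [e, Finset.sum_ite_mem]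
    rw [this, Finset.mul_sum, ← Finset.sum_add_distrib]
    refine Finset.sum_congr rfl fun v _ => ?_
    simp only [z']; ring
  have e2 : ∑ u, ∑ v, a u v * |z u - z v| = ∑ u, ∑ v, a u v * |z' u - z' v| +
      t * ∑ u, ∑ v, a u v * |e u - e v| := by
    simp only [Finset.mul_sum, ← Finset.sum_add_distrib]
    refine Finset.sum_congr rfl fun u _ => Finset.sum_congr rfl fun v _ => ?_
    have : |z u - z v| = |z' u - z' v| + t * |e u - e v| := by
      by_cases hu : u ∈ S <;> by_cases hv : v ∈ S
      · simp [z', e, hu, hv]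
      · have := hz' u
        have hzv : z v = 0 := by simpa [hmem] using hv
        simp only [z', e, hu, hv, hzv] at this ⊢
        norm_num at this ⊢
        rw [abs_of_nonneg (hz u), abs_of_nonneg (by linarith)]; ring
      · have := hz' v
        have hzu : z u = 0 := by simpa [hmem] using hu
        simp only [z', e, hu, hv, hzu] at this ⊢
        norm_num at this ⊢
        rw [abs_of_nonneg (hz v), abs_of_nonpos (by linarith)]; ring
      · simp [z', e, hu, hv]
    rw [this]; ring
  rw [e1, e2]
  have := mul_le_mul_of_nonneg_left h2 ht0.le
  linarith

/-- Cheeger's bound for a function whose support carries at most half the mass. -/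
lemma cheeger_half {U : Type} [Fintype U] (a : U → U → ℝ) (m : U → ℝ) (h : ℝ) (hh : 0 ≤ h)
    (ha : ∀ u v, 0 ≤ a u v) (hs : ∀ u v, a u v = a v u) (hm : ∀ u, m u = ∑ v, a u v)
    (hexp : ∀ S : Finset U, 2 * ∑ v ∈ S, m v ≤ ∑ v, m v →
      ∑ u ∈ S, ∑ v ∈ S, a u v ≤ (1 - h) * ∑ v ∈ S, m v)
    (y : U → ℝ)
    (hsupp : 2 * ∑ v ∈ univ.filter (fun v => y v ≠ 0), m v ≤ ∑ v, m v) :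
    h ^ 2 * ∑ v, m v * y v ^ 2 ≤ ∑ u, ∑ v, a u v * (y u - y v) ^ 2 := by
  have hm0 : ∀ v, 0 ≤ m v := fun v => by
    rw [hm]; exact Finset.sum_nonneg fun u _ => ha v u
  have hc := coarea a m h _ (fun v => y v ^ 2) (fun v => sq_nonneg _) rfl (by
    intro S hS
    have hle : 2 * ∑ v ∈ S, m v ≤ ∑ v, m v := by
      refine le_trans ?_ hsupp
      refine mul_le_mul_of_nonneg_left ?_ (by norm_num)
      refine Finset.sum_le_sum_of_subset_of_nonneg (fun v hv => ?_) fun v _ _ => hm0 v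
      have := hS v hv
      simpa using this
    have hE := hexp S hle
    have key : ∑ u, ∑ v, a u v * |(if u ∈ S then (1 : ℝ) else 0) - if v ∈ S then 1 else 0|
        = 2 * ∑ v ∈ S, m v - 2 * ∑ u ∈ S, ∑ v ∈ S, a u v := by
      have h1 : ∑ v ∈ S, m v = ∑ u, ∑ v, a u v * (if u ∈ S then (1 : ℝ) else 0) := by
        simp only [← Finset.sum_mul, ← hm]
        simp [Finset.sum_ite_mem]
      have h2 : ∑ v ∈ S, m v = ∑ u, ∑ v, a u v * (if v ∈ S then (1 : ℝ) else 0) := by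
        rw [h1, Finset.sum_comm]
        refine Finset.sum_congr rfl fun u _ => Finset.sum_congr rfl fun v _ => ?_
        rw [hs]
      have h3 : ∑ u ∈ S, ∑ v ∈ S, a u v = ∑ u, ∑ v, a u v *
          ((if u ∈ S then (1 : ℝ) else 0) * (if v ∈ S then (1 : ℝ) else 0)) := by
        rw [← Finset.sum_filter_add_sum_filter_not univ (fun u => u ∈ S)]
        rw [Finset.sum_eq_zero (s := univ.filter fun u => u ∉ S), add_zero]
        · rw [Finset.filter_mem_eq_inter, Finset.univ_inter]
          refine Finset.sum_congr rfl fun u hu => ?_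
          simp [hu, Finset.sum_ite_mem]
        · intro u hu
          simp only [mem_filter, mem_univ, true_and] at hu
          simp [hu]
      rw [two_mul (∑ v ∈ S, m v)]
      nth_rw 1 [h1]
      rw [h2, h3, Finset.mul_sum, ← Finset.sum_add_distrib, ← Finset.sum_sub_distrib]
      refine Finset.sum_congr rfl fun u _ => ?_
      rw [Finset.mul_sum, ← Finset.sum_add_distrib, ← Finset.sum_sub_distrib]
      refine Finset.sum_congr rfl fun v _ => ?_
      by_cases hu : u ∈ S <;> by_cases hv : v ∈ S <;> simp [hu, hv] <;> ring
    rw [key]; linarith)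
  set M := ∑ v, m v * y v ^ 2 with hM
  set E := ∑ u, ∑ v, a u v * (y u - y v) ^ 2 with hEdef
  have hM0 : 0 ≤ M := Finset.sum_nonneg fun v _ => mul_nonneg (hm0 v) (sq_nonneg _)
  have hplus : ∑ u, ∑ v, a u v * (y u + y v) ^ 2 ≤ 4 * M := by
    have h1 : M = ∑ u, ∑ v, a u v * y u ^ 2 := by
      simp only [← Finset.sum_mul, ← hm, hM]
    have h2 : M = ∑ u, ∑ v, a u v * y v ^ 2 := by
      rw [h1, Finset.sum_comm]
      refine Finset.sum_congr rfl fun u _ => Finset.sum_congr rfl fun v _ => ?_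
      rw [hs]
    have : 4 * M = 2 * M + 2 * M := by ring
    rw [this]
    nth_rw 1 [h1]
    rw [h2]
    simp only [Finset.mul_sum, ← Finset.sum_add_distrib]
    refine Finset.sum_le_sum fun u _ => Finset.sum_le_sum fun v _ => ?_
    nlinarith [mul_nonneg (ha u v) (sq_nonneg (y u - y v))]
  have hCS : (∑ u, ∑ v, a u v * |y u ^ 2 - y v ^ 2|) ^ 2 ≤
      E * ∑ u, ∑ v, a u v * (y u + y v) ^ 2 := by
    rw [hEdef]
    simp only [← Finset.sum_product']
    apply Finset.sum_sq_le_sum_mul_sum_of_sq_le_mul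
    · intro p _; exact mul_nonneg (ha _ _) (sq_nonneg _)
    · intro p _; exact mul_nonneg (ha _ _) (sq_nonneg _)
    · intro p _
      rw [mul_pow, sq_abs]; exact le_of_eq (by ring)
  have hE0 : 0 ≤ E := Finset.sum_nonneg fun u _ => Finset.sum_nonneg fun v _ =>
    mul_nonneg (ha _ _) (sq_nonneg _)
  have hsq : (2 * h * M) ^ 2 ≤ E * (4 * M) :=
    le_trans (pow_le_pow_left₀ (by positivity) hc 2)
      (le_trans hCS (mul_le_mul_of_nonneg_left hplus hE0))
  rcases hM0.eq_or_lt with h0 | hpos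
  · rw [← h0]; simpa using hE0
  · have : (4 * M) * (h ^ 2 * M) ≤ (4 * M) * E := by nlinarith
    exact le_of_mul_le_mul_left this (by positivity)

/-- A weighted median: at most half of the mass lies strictly on either side of it. -/
lemma exists_median {U : Type} [Fintype U] [Nonempty U] (m x : U → ℝ) (hm : ∀ v, 0 ≤ m v) :
    ∃ c : ℝ, 2 * ∑ v ∈ univ.filter (fun v => c < x v), m v ≤ ∑ v, m v ∧
      2 * ∑ v ∈ univ.filter (fun v => x v < c), m v ≤ ∑ v, m v := by
  -- the smallest value of `x` that has at most half of the mass strictly above it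
  let T := univ.filter fun w => 2 * ∑ v ∈ univ.filter (fun v => x w < x v), m v ≤ ∑ v, m v
  have hT : T.Nonempty := by
    obtain ⟨w, -, hw⟩ := univ.exists_max_image x univ_nonempty
    refine ⟨w, ?_⟩
    have : (univ.filter fun v => x w < x v) = ∅ := by
      ext v; simpa using hw v (mem_univ v)
    simp only [T, mem_filter, mem_univ, true_and, this]
    simpa using Finset.sum_nonneg fun v _ => hm v
  obtain ⟨w, hw, hmin⟩ := T.exists_min_image x hT
  refine ⟨x w, by simpa [T] using hw, ?_⟩
  by_contra! hcon
  let B := univ.filter fun v => x v < x w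
  have hB : B.Nonempty := by
    by_contra hB
    rw [Finset.not_nonempty_iff_eq_empty] at hB
    have := Finset.sum_nonneg fun (v : U) (_ : v ∈ univ) => hm v
    simp only [B] at hB
    rw [hB] at hcon
    simp at hcon; linarith
  obtain ⟨u, hu, hmax⟩ := B.exists_max_image x hB
  have huw : x u < x w := by simpa [B] using hu
  have : u ∈ T := by
    simp only [T, mem_filter, mem_univ, true_and]
    have hsplit := Finset.sum_filter_add_sum_filter_not univ (fun v => x v < x w) m
    have hle : ∑ v ∈ univ.filter (fun v => x u < x v), m v ≤
        ∑ v ∈ univ.filter (fun v => ¬ x v < x w), m v := by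
      refine Finset.sum_le_sum_of_subset_of_nonneg (fun v hv => ?_) fun v _ _ => hm v
      simp only [mem_filter, mem_univ, true_and] at hv ⊢
      intro hv'
      exact absurd (hmax v (by simp [B, hv'])) (by linarith)
    linarith
  exact absurd (hmin u this) (by linarith)

/-- Cheeger's inequality, as an upper bound on the quadratic form of the adjacency weights. -/
lemma cheeger {U : Type} [Fintype U] [Nonempty U] (a : U → U → ℝ) (m : U → ℝ) (h : ℝ)
    (hh : 0 ≤ h)
    (ha : ∀ u v, 0 ≤ a u v) (hs : ∀ u v, a u v = a v u) (hm : ∀ u, m u = ∑ v, a u v)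
    (hexp : ∀ S : Finset U, 2 * ∑ v ∈ S, m v ≤ ∑ v, m v →
      ∑ u ∈ S, ∑ v ∈ S, a u v ≤ (1 - h) * ∑ v ∈ S, m v)
    (x : U → ℝ) :
    ∑ u, ∑ v, a u v * (x u * x v) ≤ (1 - h ^ 2 / 2) * ∑ v, m v * x v ^ 2 +
      h ^ 2 / 2 * ((∑ v, m v * x v) ^ 2 / ∑ v, m v) := by
  have hm0 : ∀ v, 0 ≤ m v := fun v => by
    rw [hm]; exact Finset.sum_nonneg fun u _ => ha v u
  obtain ⟨c, hc1, hc2⟩ := exists_median m x hm0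
  have hp := cheeger_half a m h hh ha hs hm hexp (fun v => max (x v - c) 0) (by
      convert hc1 using 4 with v
      constructor
      · intro hv; by_contra hn; exact hv (max_eq_right (by linarith))
      · intro hv; have := le_max_left (x v - c) 0; intro h0; linarith)
  have hn := cheeger_half a m h hh ha hs hm hexp (fun v => max (c - x v) 0) (by
      convert hc2 using 4 with v
      constructor
      · intro hv; by_contra hn; exact hv (max_eq_right (by linarith))
      · intro hv; have := le_max_left (c - x v) 0; intro h0; linarith)
  have hE : ∑ u, ∑ v, a u v * (max (x u - c) 0 - max (x v - c) 0) ^ 2 +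
      ∑ u, ∑ v, a u v * (max (c - x u) 0 - max (c - x v) 0) ^ 2 ≤
      ∑ u, ∑ v, a u v * (x u - x v) ^ 2 := by
    simp only [← Finset.sum_add_distrib]
    refine Finset.sum_le_sum fun u _ => Finset.sum_le_sum fun v _ => ?_
    rw [← mul_add]
    refine mul_le_mul_of_nonneg_left ?_ (ha u v)
    rcases le_total (x u) c with hu | hu <;> rcases le_total (x v) c with hv | hv
    · rw [max_eq_right (by linarith), max_eq_right (by linarith), max_eq_left (by linarith),
        max_eq_left (by linarith)]; nlinarith
    · rw [max_eq_right (by linarith), max_eq_left (by linarith), max_eq_left (by linarith),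
        max_eq_right (by linarith)]; nlinarith
    · rw [max_eq_left (by linarith), max_eq_right (by linarith), max_eq_right (by linarith),
        max_eq_left (by linarith)]; nlinarith
    · rw [max_eq_left (by linarith), max_eq_left (by linarith), max_eq_right (by linarith),
        max_eq_right (by linarith)]; nlinarith
  have hQ : ∑ v, m v * max (x v - c) 0 ^ 2 + ∑ v, m v * max (c - x v) 0 ^ 2 =
      ∑ v, m v * (x v - c) ^ 2 := by
    simp only [← Finset.sum_add_distrib]
    refine Finset.sum_congr rfl fun v _ => ?_
    rcases le_total (x v) c with hv | hv
    · rw [max_eq_right (by linarith), max_eq_left (by linarith)]; ring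
    · rw [max_eq_left (by linarith), max_eq_right (by linarith)]; ring
  set M := ∑ v, m v with hM
  set L := ∑ v, m v * x v with hL
  set Q := ∑ v, m v * x v ^ 2 with hQd
  set B := ∑ u, ∑ v, a u v * (x u * x v) with hB
  have hexpand : ∑ v, m v * (x v - c) ^ 2 = Q - 2 * c * L + c ^ 2 * M := by
    rw [hQd, hL, hM, Finset.mul_sum, Finset.mul_sum, ← Finset.sum_sub_distrib,
      ← Finset.sum_add_distrib]
    refine Finset.sum_congr rfl fun v _ => ?_
    ring
  have hdir : ∑ u, ∑ v, a u v * (x u - x v) ^ 2 = Q + Q - 2 * B := by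
    have h1 : Q = ∑ u, ∑ v, a u v * x u ^ 2 := by
      simp only [← Finset.sum_mul, ← hm, hQd]
    have h2 : Q = ∑ u, ∑ v, a u v * x v ^ 2 := by
      rw [h1, Finset.sum_comm]
      refine Finset.sum_congr rfl fun u _ => Finset.sum_congr rfl fun v _ => ?_
      rw [hs]
    nth_rw 1 [h1]
    rw [h2, hB]
    simp only [Finset.mul_sum, ← Finset.sum_add_distrib, ← Finset.sum_sub_distrib]
    refine Finset.sum_congr rfl fun u _ => Finset.sum_congr rfl fun v _ => ?_
    ring
  have hM0 : 0 ≤ M := Finset.sum_nonneg fun v _ => hm0 v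
  have hvar : Q - L ^ 2 / M ≤ ∑ v, m v * (x v - c) ^ 2 := by
    rw [hexpand]
    rcases hM0.eq_or_lt with h0 | hpos
    · have hz : ∀ v, m v = 0 := by
        intro v
        exact (Finset.sum_eq_zero_iff_of_nonneg fun v _ => hm0 v).1 h0.symm v (mem_univ v)
      have : L = 0 := by rw [hL]; simp [hz]
      rw [this, ← h0]; simp
    · have : L ^ 2 / M - 2 * c * L + c ^ 2 * M = (L - c * M) ^ 2 / M := by
        field_simp; ring
      have h2 : 0 ≤ (L - c * M) ^ 2 / M := by positivity
      linarith
  have := mul_le_mul_of_nonneg_left hvar (sq_nonneg h)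
  rw [hdir] at hE
  rw [← hQ] at this
  nlinarith

/-! ### Weighted sums over the faces of a complex -/

section Faces

variable {V : Type} [DecidableEq V] [Fintype V] {d : ℕ}

/-- All `k`-element sets of vertices. Sums over the faces of cardinality `k` weighted by degree
are taken over this set, since non-faces have degree `0`. -/
def lay (V : Type) [DecidableEq V] [Fintype V] (k : ℕ) : Finset (Finset V) :=
  powersetCard k univ

lemma mem_lay {k : ℕ} {σ : Finset V} : σ ∈ lay V k ↔ σ.card = k := by
  simp [lay, mem_powersetCard]

lemma deg_eq_zero (X : SC V d) {σ : Finset V} (hσ : σ ∉ X.faces) : X.deg σ = 0 := by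
  rw [SC.deg, Finset.card_eq_zero, Finset.filter_eq_empty_iff]
  intro τ hτ hsub
  exact hσ (X.down_closed τ (mem_filter.1 hτ).1 σ hsub)

lemma deg_pos (X : SC V d) {σ : Finset V} (hσ : σ ∈ X.faces) : 0 < X.deg σ := by
  obtain ⟨τ, hτ, hsub, hc⟩ := X.pure σ hσ
  exact Finset.card_pos.2 ⟨τ, by simp [SC.fc, hτ, hsub, hc]⟩

/-- Double counting: each top face containing `σ` has `d + 1 - |σ|` vertices outside `σ`. -/
lemma sum_deg_insert (X : SC V d) (σ : Finset V) :
    ∑ v ∈ σᶜ, (X.deg (insert v σ) : ℝ) = ((d : ℝ) + 1 - σ.card) * X.deg σ := by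
  have h1 : ∀ v, (X.deg (insert v σ) : ℝ) =
      ∑ τ ∈ (X.fc (d + 1)).filter fun τ => σ ⊆ τ, if v ∈ τ then (1 : ℝ) else 0 := by
    intro v
    rw [← Finset.sum_filter, Finset.filter_filter]
    simp only [SC.deg, Finset.sum_const, nsmul_eq_mul, mul_one]
    congr 2
    ext τ
    simp only [mem_filter, Finset.insert_subset_iff]
    tauto
  simp only [h1]
  rw [Finset.sum_comm]
  have h2 : ∀ τ ∈ (X.fc (d + 1)).filter fun τ => σ ⊆ τ,
      ∑ v ∈ σᶜ, (if v ∈ τ then (1 : ℝ) else 0) = (d : ℝ) + 1 - σ.card := by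
    intro τ hτ
    simp only [SC.fc, mem_filter] at hτ
    obtain ⟨⟨-, hc⟩, hsub⟩ := hτ
    rw [← Finset.sum_filter]
    have : σᶜ.filter (fun v => v ∈ τ) = τ \ σ := by
      ext v; simp [and_comm]
    rw [this, Finset.sum_const, nsmul_eq_mul, mul_one, Finset.cast_card_sdiff hsub, hc]
    push_cast; ring
  rw [Finset.sum_congr rfl h2, Finset.sum_const, nsmul_eq_mul, SC.deg]
  ring

/-- Flags `(ρ, v ∈ ρ)` correspond to pairs `(σ, v ∉ σ)` through `ρ = σ ∪ {v}`. -/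
lemma sum_lay_succ (k : ℕ) (G : Finset V → V → ℝ) :
    ∑ ρ ∈ lay V (k + 1), ∑ v ∈ ρ, G ρ v =
      ∑ σ ∈ lay V k, ∑ v ∈ σᶜ, G (insert v σ) v := by
  rw [Finset.sum_sigma', Finset.sum_sigma']
  refine Finset.sum_bij' (fun p _ => ⟨p.1.erase p.2, p.2⟩) (fun p _ => ⟨insert p.2 p.1, p.2⟩)
    ?_ ?_ ?_ ?_ ?_
  · rintro ⟨ρ, v⟩ h
    simp only [mem_sigma, mem_lay, mem_compl] at h ⊢
    exact ⟨by rw [Finset.card_erase_of_mem h.2, h.1]; rfl, by simp⟩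
  · rintro ⟨σ, v⟩ h
    simp only [mem_sigma, mem_lay, mem_compl] at h ⊢
    exact ⟨by rw [Finset.card_insert_of_notMem h.2, h.1], by simp⟩
  · rintro ⟨ρ, v⟩ h
    simp only [mem_sigma] at h
    simp [Finset.insert_erase h.2]
  · rintro ⟨σ, v⟩ h
    simp only [mem_sigma, mem_compl] at h
    simp [Finset.erase_insert h.2]
  · rintro ⟨ρ, v⟩ h
    simp only [mem_sigma] at h
    simp [Finset.insert_erase h.2]

lemma sum_lay_insert (X : SC V d) (k : ℕ) (F : Finset V → ℝ) :
    ∑ τ ∈ lay V k, ∑ v ∈ τᶜ, (X.deg (insert v τ) : ℝ) * F (insert v τ) =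
      (k + 1) * ∑ σ ∈ lay V (k + 1), (X.deg σ : ℝ) * F σ := by
  rw [← sum_lay_succ k fun ρ _ => (X.deg ρ : ℝ) * F ρ, Finset.mul_sum]
  refine Finset.sum_congr rfl fun ρ hρ => ?_
  rw [Finset.sum_const, nsmul_eq_mul, mem_lay.1 hρ]
  push_cast; ring

lemma sum_lay_erase (X : SC V d) (k : ℕ) (F : Finset V → ℝ) :
    ∑ ρ ∈ lay V (k + 1), ∑ v ∈ ρ, (X.deg ρ : ℝ) * F (ρ.erase v) =
      ((d : ℝ) + 1 - k) * ∑ σ ∈ lay V k, (X.deg σ : ℝ) * F σ := by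
  rw [sum_lay_succ k fun ρ v => (X.deg ρ : ℝ) * F (ρ.erase v), Finset.mul_sum]
  refine Finset.sum_congr rfl fun σ hσ => ?_
  have : ∀ v ∈ σᶜ, (X.deg (insert v σ) : ℝ) * F ((insert v σ).erase v) =
      (X.deg (insert v σ) : ℝ) * F σ := by
    intro v hv
    rw [Finset.erase_insert (mem_compl.1 hv)]
  rw [Finset.sum_congr rfl this, ← Finset.sum_mul, sum_deg_insert, mem_lay.1 hσ]
  ring

/-- The sum of `H σ σ'` over ordered pairs of neighbouring `k`-element faces, weighted by
`deg (σ ∪ σ')`; the neighbours of `σ` are enumerated as `(σ \ {v}) ∪ {u}`. -/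
def pairSum (X : SC V d) (k : ℕ) (H : Finset V → Finset V → ℝ) : ℝ :=
  ∑ σ ∈ lay V k, ∑ v ∈ σ, ∑ u ∈ σᶜ, (X.deg (insert u σ) : ℝ) * H σ (insert u (σ.erase v))

lemma pairSum_fst (X : SC V d) (k : ℕ) (F : Finset V → ℝ) :
    pairSum X k (fun σ _ => F σ) =
      k * ((d : ℝ) + 1 - k) * ∑ σ ∈ lay V k, (X.deg σ : ℝ) * F σ := by
  rw [pairSum, Finset.mul_sum]
  refine Finset.sum_congr rfl fun σ hσ => ?_
  rw [Finset.sum_const, ← Finset.sum_mul, sum_deg_insert, mem_lay.1 hσ, nsmul_eq_mul]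
  ring

/-- Garland's decomposition: a pair of neighbours is a pair of adjacent vertices in the link of
its intersection. -/
lemma pairSum_link (X : SC V d) (k : ℕ) (H : Finset V → Finset V → ℝ) :
    pairSum X (k + 1) H = ∑ τ ∈ lay V k, ∑ v ∈ τᶜ, ∑ u ∈ (insert v τ)ᶜ,
      (X.deg (insert u (insert v τ)) : ℝ) * H (insert v τ) (insert u τ) := by
  rw [pairSum, sum_lay_succ k fun σ v => ∑ u ∈ σᶜ,
    (X.deg (insert u σ) : ℝ) * H σ (insert u (σ.erase v))]
  refine Finset.sum_congr rfl fun τ _ => Finset.sum_congr rfl fun v hv => ?_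
  rw [Finset.erase_insert (mem_compl.1 hv)]

/-- The quadratic form of the up-down walk: averaging `f` up one level and squaring. -/
lemma sum_sq_up (X : SC V d) (k : ℕ) (f : Finset V → ℝ) :
    ∑ ρ ∈ lay V (k + 1), (X.deg ρ : ℝ) * (∑ v ∈ ρ, f (ρ.erase v)) ^ 2 =
      ((d : ℝ) + 1 - k) * ∑ σ ∈ lay V k, (X.deg σ : ℝ) * f σ ^ 2 +
        pairSum X k (fun σ τ => f σ * f τ) := by
  rw [← sum_lay_erase X k fun σ => f σ ^ 2]
  have h : pairSum X k (fun σ τ => f σ * f τ) = ∑ ρ ∈ lay V (k + 1), ∑ u ∈ ρ,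
      (X.deg ρ : ℝ) * ∑ v ∈ ρ.erase u, f (ρ.erase u) * f (ρ.erase v) := by
    rw [sum_lay_succ k fun ρ u =>
      (X.deg ρ : ℝ) * ∑ v ∈ ρ.erase u, f (ρ.erase u) * f (ρ.erase v), pairSum]
    refine Finset.sum_congr rfl fun σ _ => ?_
    rw [Finset.sum_comm]
    refine Finset.sum_congr rfl fun u hu => ?_
    rw [mem_compl] at hu
    rw [Finset.erase_insert hu, Finset.mul_sum]
    refine Finset.sum_congr rfl fun v hv => ?_
    rw [Finset.erase_insert_of_ne (by rintro rfl; exact hu hv)]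
  rw [h, ← Finset.sum_add_distrib]
  refine Finset.sum_congr rfl fun ρ _ => ?_
  rw [← Finset.sum_add_distrib, sq, Finset.sum_mul_sum, Finset.mul_sum]
  refine Finset.sum_congr rfl fun u hu => ?_
  rw [← Finset.add_sum_erase ρ _ hu]
  ring

/-- Positivity of the up-down walk, which bounds the spectrum of the non-lazy walk from below. -/
lemma pairSum_lower (X : SC V d) (k : ℕ) (f : Finset V → ℝ) :
    -(((d : ℝ) + 1 - k) * ∑ σ ∈ lay V k, (X.deg σ : ℝ) * f σ ^ 2) ≤
      pairSum X k (fun σ τ => f σ * f τ) := by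
  have h : 0 ≤ ∑ ρ ∈ lay V (k + 1), (X.deg ρ : ℝ) * (∑ v ∈ ρ, f (ρ.erase v)) ^ 2 :=
    Finset.sum_nonneg fun ρ _ => by positivity
  rw [sum_sq_up] at h
  linarith

/-! ### Links of a skeleton expander -/

/-- Double counting: a face of cardinality `n + j + 1` above `τ` arises from `j + 1` faces of
cardinality `n + j` above `τ` by adding a vertex. -/
lemma sum_lay_superset (τ : Finset V) (n j : ℕ) (hn : τ.card = n) (φ : Finset V → ℝ) :
    ((j : ℝ) + 1) * ∑ ρ ∈ (lay V (n + j + 1)).filter (τ ⊆ ·), φ ρ =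
      ∑ σ ∈ (lay V (n + j)).filter (τ ⊆ ·), ∑ v ∈ σᶜ, φ (insert v σ) := by
  have h := sum_lay_succ (V := V) (n + j) fun ρ v => if τ ⊆ ρ.erase v then φ ρ else 0
  rw [Finset.mul_sum, Finset.sum_filter, Finset.sum_filter]
  convert h using 2 with ρ hρ σ hσ
  · split_ifs with hsub
    · rw [← Finset.sum_filter, Finset.sum_const, nsmul_eq_mul]
      have : ρ.filter (fun v => τ ⊆ ρ.erase v) = ρ \ τ := by
        ext v
        simp only [mem_filter, mem_sdiff, Finset.subset_erase]
        tauto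
      rw [this, Finset.cast_card_sdiff hsub, mem_lay.1 hρ, hn]
      push_cast; ring
    · symm
      refine Finset.sum_eq_zero fun v _ => ?_
      rw [if_neg fun h => hsub (h.trans (Finset.erase_subset _ _))]
  · split_ifs with hsub
    · refine Finset.sum_congr rfl fun v hv => ?_
      rw [Finset.erase_insert (mem_compl.1 hv), if_pos hsub]
    · symm
      refine Finset.sum_eq_zero fun v hv => ?_
      rw [Finset.erase_insert (mem_compl.1 hv), if_neg hsub]

lemma sum_link_one (τ : Finset V) (φ : Finset V → ℝ) :
    ∑ ρ ∈ (lay V (τ.card + 1)).filter (τ ⊆ ·), φ ρ = ∑ v ∈ τᶜ, φ (insert v τ) := by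
  have h := sum_lay_superset τ τ.card 0 rfl φ
  have h2 : (lay V (τ.card + 0)).filter (τ ⊆ ·) = {τ} := by
    ext σ
    simp only [mem_filter, mem_lay, mem_singleton, add_zero]
    constructor
    · rintro ⟨h1, h2⟩; exact (Finset.eq_of_subset_of_card_le h2 h1.le).symm
    · rintro rfl; simp
  rw [h2, Finset.sum_singleton] at h
  simpa using h

lemma sum_link_two (τ : Finset V) (φ : Finset V → ℝ) :
    2 * ∑ ρ ∈ (lay V (τ.card + 2)).filter (τ ⊆ ·), φ ρ =
      ∑ v ∈ τᶜ, ∑ u ∈ (insert v τ)ᶜ, φ (insert u (insert v τ)) := by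
  have h := sum_lay_superset τ τ.card 1 rfl φ
  rw [sum_link_one τ fun σ => ∑ v ∈ σᶜ, φ (insert v σ)] at h
  rw [← h]; norm_num

lemma sum_fc_filter (X : SC V d) (k : ℕ) (p : Finset V → Prop) [DecidablePred p] :
    ∑ ρ ∈ (X.fc k).filter p, (X.deg ρ : ℝ) = ∑ ρ ∈ (lay V k).filter p, (X.deg ρ : ℝ) := by
  refine Finset.sum_subset (fun ρ h => ?_) fun ρ h h' => ?_
  · simp only [mem_filter, SC.fc, mem_lay] at h ⊢; exact ⟨h.1.2, h.2⟩
  · simp only [mem_filter, SC.fc, mem_lay] at h h'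
    rw [deg_eq_zero X fun hf => h' ⟨⟨hf, h.1⟩, h.2⟩]; simp

/-- The edge weights of the link of `τ`: `deg (τ ∪ {v, u})` for distinct vertices outside `τ`. -/
def linkW (X : SC V d) (τ : Finset V) (v u : V) : ℝ :=
  if v ∉ τ ∧ u ∉ insert v τ then (X.deg (insert u (insert v τ)) : ℝ) else 0

lemma linkW_symm (X : SC V d) (τ : Finset V) (v u : V) : linkW X τ v u = linkW X τ u v := by
  unfold linkW
  rw [Finset.insert_comm]
  congr 1
  simp only [mem_insert, not_or, eq_iff_iff]
  constructor <;> rintro ⟨h1, h2, h3⟩ <;> exact ⟨h3, Ne.symm h2, h1⟩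

lemma sum_linkW (X : SC V d) (τ : Finset V) (H : V → V → ℝ) :
    ∑ v, ∑ u, linkW X τ v u * H v u =
      ∑ v ∈ τᶜ, ∑ u ∈ (insert v τ)ᶜ, (X.deg (insert u (insert v τ)) : ℝ) * H v u := by
  have hc : ∀ s : Finset V, sᶜ = (univ : Finset V).filter fun v => v ∉ s := fun s => by ext; simp
  simp only [hc]
  rw [Finset.sum_filter]
  refine Finset.sum_congr rfl fun v _ => ?_
  rw [Finset.sum_filter]
  by_cases hv : v ∉ τ
  · rw [if_pos hv]
    refine Finset.sum_congr rfl fun u _ => ?_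
    by_cases hu : u ∉ insert v τ <;> simp only [linkW, hv, hu] <;> simp
  · simp [linkW, hv]

lemma sum_linkW_right (X : SC V d) (τ : Finset V) (v : V) :
    ∑ u, linkW X τ v u =
      if v ∉ τ then ((d : ℝ) - τ.card) * X.deg (insert v τ) else 0 := by
  by_cases hv : v ∉ τ
  · rw [if_pos hv]
    have h := sum_deg_insert X (insert v τ)
    rw [Finset.card_insert_of_notMem hv] at h
    push_cast at h
    rw [show (d : ℝ) - τ.card = d + 1 - (τ.card + 1) by ring, ← h]
    have hc : (insert v τ)ᶜ = (univ : Finset V).filter fun u => u ∉ insert v τ := by ext; simp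
    rw [hc, Finset.sum_filter]
    refine Finset.sum_congr rfl fun u _ => ?_
    simp only [linkW, hv, not_false_eq_true, true_and]
  · simp [linkW, hv]

/-- Passage from normalized to unnormalized weights in a link: `M` and `B` are the total degrees
of its vertices and edges, `a` and `b` the parts inside `S`, and `c` is the number of edges through
a vertex in each top face. -/
lemma expand_arith {a b c M B α : ℝ} (hc : 0 < c) (hM : 0 < M) (ha : 0 ≤ a)
    (hX : b / B ≤ a / M * (a / M + α)) (hS : 2 * (c * a) ≤ c * M) (hB : 2 * B = c * M) :
    2 * b ≤ (1 - (1 / 2 - α)) * (c * a) := by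
  have hB' : B = c * M / 2 := by linarith
  have hhalf : a / M ≤ 1 / 2 := by
    rw [div_le_iff₀ hM]
    nlinarith
  have h1 : b / B ≤ a / M * (1 / 2 + α) :=
    hX.trans (mul_le_mul_of_nonneg_left (by linarith) (by positivity))
  have hBpos : 0 < B := by rw [hB']; positivity
  rw [div_le_iff₀ hBpos, hB'] at h1
  have h2 : a / M * (1 / 2 + α) * (c * M / 2) = (1 / 2 + α) * (c * a) / 2 := by
    field_simp
  rw [h2] at h1
  linarith

/-- Skeleton expansion says that a vertex set carrying at most half of the mass of a link keeps
at most a fraction `1/2 + α` of its edge weight inside. -/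
lemma link_expands (X : SC V d) {α : ℝ} (hX : X.IsSkeletonExpander α) (τ : Finset V)
    (hτ : τ.card < d) (S : Finset V)
    (hS : 2 * ∑ v ∈ S, ∑ u, linkW X τ v u ≤ ∑ v, ∑ u, linkW X τ v u) :
    ∑ v ∈ S, ∑ u ∈ S, linkW X τ v u ≤ (1 - (1 / 2 - α)) * ∑ v ∈ S, ∑ u, linkW X τ v u := by
  by_cases hf : τ ∈ X.faces
  swap
  · have h0 : ∀ v u, linkW X τ v u = 0 := by
      intro v u
      unfold linkW
      split_ifs
      · have : insert u (insert v τ) ∉ X.faces := fun h => hf (X.down_closed _ h τ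
          ((Finset.subset_insert _ _).trans (Finset.subset_insert _ _)))
        rw [deg_eq_zero X this]; simp
      · rfl
    simp [h0]
  have hc : (0 : ℝ) < (d : ℝ) - τ.card := by
    have : (τ.card : ℝ) < d := by exact_mod_cast hτ
    linarith
  have hw : (0 : ℝ) < X.deg τ := by exact_mod_cast deg_pos X hf
  set c : ℝ := (d : ℝ) - τ.card with hcdef
  have hX' := hX τ hf S
  have one : ∀ T : Finset V,
      c * ∑ ρ ∈ (X.fc (τ.card + 1)).filter (fun ρ => τ ⊆ ρ ∧ ρ \ τ ⊆ T), (X.deg ρ : ℝ) =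
        ∑ v ∈ T, ∑ u, linkW X τ v u := by
    intro T
    rw [sum_fc_filter, ← Finset.filter_filter, Finset.sum_filter, sum_link_one τ fun ρ =>
      if ρ \ τ ⊆ T then (X.deg ρ : ℝ) else 0]
    simp only [sum_linkW_right]
    rw [← Finset.sum_filter (s := T), ← Finset.mul_sum, ← hcdef]
    congr 1
    have : T.filter (fun v => v ∉ τ) = τᶜ.filter fun v => v ∈ T := by
      ext v; simp [and_comm]
    rw [this, Finset.sum_filter]
    refine Finset.sum_congr rfl fun v hv => ?_
    rw [mem_compl] at hv
    rw [Finset.insert_sdiff_of_notMem _ hv, Finset.sdiff_self]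
    simp
  have two : ∀ T : Finset V,
      2 * ∑ ρ ∈ (X.fc (τ.card + 2)).filter (fun ρ => τ ⊆ ρ ∧ ρ \ τ ⊆ T), (X.deg ρ : ℝ) =
        ∑ v ∈ T, ∑ u ∈ T, linkW X τ v u := by
    intro T
    have h := sum_linkW X τ fun v u => if v ∈ T ∧ u ∈ T then 1 else 0
    have hl : ∑ v, ∑ u, linkW X τ v u * (if v ∈ T ∧ u ∈ T then 1 else 0) =
        ∑ v ∈ T, ∑ u ∈ T, linkW X τ v u := by
      rw [← Finset.sum_subset (Finset.subset_univ T)]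
      · refine Finset.sum_congr rfl fun v hv => ?_
        simp [hv, Finset.sum_ite_mem]
      · intro v _ hv
        simp [hv]
    rw [← hl, h, sum_fc_filter, ← Finset.filter_filter, Finset.sum_filter,
      sum_link_two τ fun ρ => if ρ \ τ ⊆ T then (X.deg ρ : ℝ) else 0]
    refine Finset.sum_congr rfl fun v hv => Finset.sum_congr rfl fun u hu => ?_
    simp only [mem_compl, mem_insert, not_or] at hv hu
    rw [Finset.insert_sdiff_of_notMem _ hu.2, Finset.insert_sdiff_of_notMem _ hv,
      Finset.sdiff_self]
    have : insert u (insert v ∅) ⊆ T ↔ v ∈ T ∧ u ∈ T := by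
      simp [Finset.insert_subset_iff, and_comm]
    simp only [this, mul_ite, mul_one, mul_zero]
  have u1 := one univ
  have u2 := two univ
  have s1 := one S
  have s2 := two S
  simp only [Finset.subset_univ, and_true] at u1 u2
  simp only [SC.linkSubsetNorm] at hX'
  rw [← s2]
  rw [← u1, ← s1] at hS
  rw [← s1]
  rw [← u1] at u2
  have hM : ∑ ρ ∈ (X.fc (τ.card + 1)).filter (τ ⊆ ·), (X.deg ρ : ℝ) = (c + 1) * X.deg τ := by
    rw [sum_fc_filter, sum_link_one, sum_deg_insert]; ring
  have hMpos : 0 < ∑ ρ ∈ (X.fc (τ.card + 1)).filter (τ ⊆ ·), (X.deg ρ : ℝ) := by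
    rw [hM]; positivity
  have ha : 0 ≤ ∑ ρ ∈ (X.fc (τ.card + 1)).filter (fun ρ => τ ⊆ ρ ∧ ρ \ τ ⊆ S),
      (X.deg ρ : ℝ) := Finset.sum_nonneg fun _ _ => by positivity
  exact expand_arith hc hMpos ha hX' hS u2

/-! ### Local-to-global: spectral gap of the walk on faces -/

/-- The conditional expectation of `f` one level down: the average of `f` over the faces
`τ ∪ {v}`, weighted by degree (and `0` if `τ` is not a face). -/
noncomputable def down (X : SC V d) (f : Finset V → ℝ) (τ : Finset V) : ℝ :=
  (∑ v ∈ τᶜ, (X.deg (insert v τ) : ℝ) * f (insert v τ)) / (((d : ℝ) + 1 - τ.card) * X.deg τ)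

lemma deg_mul_down (X : SC V d) (f : Finset V → ℝ) (τ : Finset V) (hτ : τ.card ≤ d) :
    ((d : ℝ) + 1 - τ.card) * X.deg τ * down X f τ =
      ∑ v ∈ τᶜ, (X.deg (insert v τ) : ℝ) * f (insert v τ) := by
  have hc : (0 : ℝ) < (d : ℝ) + 1 - τ.card := by
    have : (τ.card : ℝ) ≤ d := by exact_mod_cast hτ
    linarith
  by_cases hf : τ ∈ X.faces
  · have hw : (0 : ℝ) < X.deg τ := by exact_mod_cast deg_pos X hf
    unfold down
    field_simp
  · rw [deg_eq_zero X hf]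
    simp only [Nat.cast_zero, mul_zero, zero_mul]
    symm
    refine Finset.sum_eq_zero fun v _ => ?_
    rw [deg_eq_zero X fun h => hf (X.down_closed _ h τ (Finset.subset_insert _ _))]
    simp

/-- Cheeger's inequality in the link of a single face `τ`, applied to `v ↦ f (τ ∪ {v})`. -/
lemma link_bound (X : SC V d) {α : ℝ} (hX : X.IsSkeletonExpander α) (hα : α ≤ 1 / 2)
    (τ : Finset V) (hτ : τ.card < d) (f : Finset V → ℝ) :
    ∑ v ∈ τᶜ, ∑ u ∈ (insert v τ)ᶜ, (X.deg (insert u (insert v τ)) : ℝ) *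
        (f (insert v τ) * f (insert u τ)) ≤
      (1 - (1 / 2 - α) ^ 2 / 2) * (((d : ℝ) - τ.card) *
          ∑ v ∈ τᶜ, (X.deg (insert v τ) : ℝ) * f (insert v τ) ^ 2) +
        (1 / 2 - α) ^ 2 / 2 * (((d : ℝ) - τ.card) * (((d : ℝ) + 1 - τ.card) *
          (X.deg τ * down X f τ ^ 2))) := by
  have hc : (0 : ℝ) < (d : ℝ) - τ.card := by
    have : (τ.card : ℝ) < d := by exact_mod_cast hτ
    linarith
  have hV : Nonempty V := by
    obtain ⟨ρ, -, -, h⟩ := X.pure ∅ X.empty_mem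
    have : ρ.Nonempty := Finset.card_pos.1 (by omega)
    exact ⟨this.choose⟩
  have hch := cheeger (linkW X τ) (fun v => ∑ u, linkW X τ v u) (1 / 2 - α) (by linarith)
    (fun u v => by unfold linkW; split_ifs <;> positivity) (linkW_symm X τ) (fun _ => rfl)
    (link_expands X hX τ hτ) (fun v => f (insert v τ))
  have hmass : ∀ g : V → ℝ, ∑ v, (∑ u, linkW X τ v u) * g v =
      ((d : ℝ) - τ.card) * ∑ v ∈ τᶜ, (X.deg (insert v τ) : ℝ) * g v := by
    intro g
    have hcm : τᶜ = univ.filter fun v => v ∉ τ := by ext; simp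
    rw [hcm, Finset.sum_filter, Finset.mul_sum]
    refine Finset.sum_congr rfl fun v _ => ?_
    rw [sum_linkW_right]
    split_ifs <;> ring
  have hM : ∑ v, ∑ u, linkW X τ v u =
      ((d : ℝ) - τ.card) * (((d : ℝ) + 1 - τ.card) * X.deg τ) := by
    have := hmass fun _ => 1
    simp only [mul_one] at this
    rw [this, sum_deg_insert]
  rw [sum_linkW, hmass fun v => f (insert v τ) ^ 2, hmass, hM, ← deg_mul_down X f τ hτ.le] at hch
  refine hch.trans (le_of_eq ?_)
  congr 2
  by_cases hf : τ ∈ X.faces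
  · have hw : (0 : ℝ) < X.deg τ := by exact_mod_cast deg_pos X hf
    have : (0 : ℝ) < (d : ℝ) + 1 - τ.card := by linarith
    field_simp
  · rw [deg_eq_zero X hf]; simp

/-- Garland's method: summing `link_bound` over all faces of cardinality `k`. -/
lemma garland (X : SC V d) {α : ℝ} (hX : X.IsSkeletonExpander α) (hα : α ≤ 1 / 2)
    (k : ℕ) (hk : k < d) (f : Finset V → ℝ) :
    pairSum X (k + 1) (fun σ τ => f σ * f τ) ≤
      (1 - (1 / 2 - α) ^ 2 / 2) * (((d : ℝ) - k) * ((k + 1) *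
          ∑ σ ∈ lay V (k + 1), (X.deg σ : ℝ) * f σ ^ 2)) +
        (1 / 2 - α) ^ 2 / 2 * (((d : ℝ) - k) * (((d : ℝ) + 1 - k) *
          ∑ τ ∈ lay V k, (X.deg τ : ℝ) * down X f τ ^ 2)) := by
  rw [pairSum_link, ← sum_lay_insert X k fun σ => f σ ^ 2]
  simp only [Finset.mul_sum (lay V k), ← Finset.sum_add_distrib]
  refine Finset.sum_le_sum fun τ hτ => ?_
  rw [mem_lay] at hτ
  have := link_bound X hX hα τ (by omega) f
  rw [hτ] at this
  exact this

lemma sum_down (X : SC V d) (k : ℕ) (hk : k ≤ d) (f : Finset V → ℝ) :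
    ((d : ℝ) + 1 - k) * ∑ τ ∈ lay V k, (X.deg τ : ℝ) * down X f τ =
      (k + 1) * ∑ σ ∈ lay V (k + 1), (X.deg σ : ℝ) * f σ := by
  rw [← sum_lay_insert, Finset.mul_sum]
  refine Finset.sum_congr rfl fun τ hτ => ?_
  rw [mem_lay] at hτ
  rw [← deg_mul_down X f τ (by omega), hτ, mul_assoc]

/-- The down operator is adjoint to averaging upwards, so by Cauchy–Schwarz its norm is
controlled by the quadratic form of the walk one level below. -/
lemma down_sq_le (X : SC V d) (k : ℕ) (hk : k ≤ d) (f : Finset V → ℝ) :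
    (((d : ℝ) + 1 - k) * ∑ τ ∈ lay V k, (X.deg τ : ℝ) * down X f τ ^ 2) ^ 2 ≤
      (∑ σ ∈ lay V (k + 1), (X.deg σ : ℝ) * f σ ^ 2) *
        (((d : ℝ) + 1 - k) * ∑ τ ∈ lay V k, (X.deg τ : ℝ) * down X f τ ^ 2 +
          pairSum X k (fun σ τ => down X f σ * down X f τ)) := by
  rw [← sum_sq_up]
  have hadj : ((d : ℝ) + 1 - k) * ∑ τ ∈ lay V k, (X.deg τ : ℝ) * down X f τ ^ 2 =
      ∑ ρ ∈ lay V (k + 1), (X.deg ρ : ℝ) * (f ρ * ∑ v ∈ ρ, down X f (ρ.erase v)) := by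
    have h := sum_lay_succ (V := V) k fun ρ v => (X.deg ρ : ℝ) * (f ρ * down X f (ρ.erase v))
    simp only [← Finset.mul_sum] at h
    rw [h, Finset.mul_sum]
    refine Finset.sum_congr rfl fun τ hτ => ?_
    rw [mem_lay] at hτ
    have h2 := deg_mul_down X f τ (by omega)
    rw [hτ] at h2
    calc ((d : ℝ) + 1 - k) * ((X.deg τ : ℝ) * down X f τ ^ 2)
        = (((d : ℝ) + 1 - k) * X.deg τ * down X f τ) * down X f τ := by ring
      _ = _ := by
        rw [h2, Finset.sum_mul]
        refine Finset.sum_congr rfl fun v hv => ?_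
        rw [Finset.erase_insert (mem_compl.1 hv)]
        ring
  rw [hadj]
  refine Finset.sum_sq_le_sum_mul_sum_of_sq_le_mul _ (fun _ _ => by positivity)
    (fun _ _ => by positivity) fun ρ _ => le_of_eq (by ring)

/-- Spectral gap of the walk on the faces of cardinality `n + 1`: on functions of mean zero its
quadratic form is at most `1 - λ ^ (n + 1) / (n + 1)`, where `λ = (1/2 - α)² / 2` bounds the
spectral gaps of all links from below. -/
lemma spectral_gap (X : SC V d) {α : ℝ} (hX : X.IsSkeletonExpander α) (hα0 : 0 ≤ α)
    (hα : α ≤ 1 / 2) :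
    ∀ n : ℕ, n < d → ∀ f : Finset V → ℝ, ∑ σ ∈ lay V (n + 1), (X.deg σ : ℝ) * f σ = 0 →
      pairSum X (n + 1) (fun σ τ => f σ * f τ) ≤
        (1 - ((1 / 2 - α) ^ 2 / 2) ^ (n + 1) / (n + 1)) * (((n : ℝ) + 1) * ((d : ℝ) - n) *
          ∑ σ ∈ lay V (n + 1), (X.deg σ : ℝ) * f σ ^ 2) := by
  intro n
  induction n with
  | zero =>
    intro hn f hf
    have hg := garland X hX hα 0 hn f
    have hD := sum_down X 0 hn.le f
    rw [hf] at hD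
    have hlay : lay V 0 = {∅} := by ext; simp [mem_lay]
    have hw : (0 : ℝ) < X.deg ∅ := by exact_mod_cast deg_pos X X.empty_mem
    have h0 : down X f ∅ = 0 := by
      rw [hlay] at hD
      simp only [Finset.sum_singleton, Nat.cast_zero, mul_zero] at hD
      have hd : (0 : ℝ) < d + 1 - 0 := by rw [sub_zero]; positivity
      exact (mul_eq_zero.1 ((mul_eq_zero.1 hD).resolve_left hd.ne')).resolve_left hw.ne'
    rw [hlay, Finset.sum_singleton, h0] at hg
    refine hg.trans (le_of_eq ?_)
    push_cast
    ring
  | succ n ih =>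
    intro hn f hf
    have hg := garland X hX hα (n + 1) hn f
    have hD := sum_down X (n + 1) hn.le f
    rw [hf, mul_zero] at hD
    have hdn : (0 : ℝ) < (d : ℝ) - (n + 1 : ℕ) := by
      have : ((n + 1 : ℕ) : ℝ) < d := by exact_mod_cast hn
      linarith
    have hc : (0 : ℝ) < (d : ℝ) + 1 - (n + 1 : ℕ) := by linarith
    have hM : ∑ τ ∈ lay V (n + 1), (X.deg τ : ℝ) * down X f τ = 0 := by
      exact (mul_eq_zero.1 hD).resolve_left hc.ne'
    have hi := ih (by omega) (down X f) hM
    have hs := down_sq_le X (n + 1) hn.le f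
    have hq0 : 0 ≤ ∑ τ ∈ lay V (n + 1), (X.deg τ : ℝ) * down X f τ ^ 2 :=
      Finset.sum_nonneg fun _ _ => by positivity
    have hQ0 : 0 ≤ ∑ σ ∈ lay V (n + 1 + 1), (X.deg σ : ℝ) * f σ ^ 2 :=
      Finset.sum_nonneg fun _ _ => by positivity
    set q := ∑ τ ∈ lay V (n + 1), (X.deg τ : ℝ) * down X f τ ^ 2
    set Q := ∑ σ ∈ lay V (n + 1 + 1), (X.deg σ : ℝ) * f σ ^ 2
    set l := (1 / 2 - α) ^ 2 / 2 with hl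
    have hl0 : 0 ≤ l := by positivity
    set c : ℝ := (d : ℝ) + 1 - (n + 1 : ℕ) with hcdef
    have hcn : (d : ℝ) - n = c := by rw [hcdef]; push_cast; ring
    rw [hcn] at hi
    have hi' : (1 - l ^ (n + 1) / (n + 1)) * (((n : ℝ) + 1) * c * q) =
        (n + 1 - l ^ (n + 1)) * (c * q) := by
      field_simp
    rw [hi'] at hi
    -- the contraction of the down operator obtained from the gap one level below
    have hcq : c * q ≤ Q * (n + 2 - l ^ (n + 1)) := by
      have h1 : (c * q) * (c * q) ≤ (c * q) * (Q * (n + 2 - l ^ (n + 1))) := by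
        calc (c * q) * (c * q) = (c * q) ^ 2 := by ring
          _ ≤ _ := hs
          _ ≤ Q * (c * q + (n + 1 - l ^ (n + 1)) * (c * q)) :=
            mul_le_mul_of_nonneg_left (by linarith) hQ0
          _ = _ := by ring
      rcases (mul_nonneg hc.le hq0).eq_or_lt with h0 | hpos
      · rw [← h0]
        have hl1 : l ^ (n + 1) ≤ 1 := pow_le_one₀ hl0 (by rw [hl]; nlinarith)
        refine mul_nonneg hQ0 ?_
        have : (0 : ℝ) ≤ n := by positivity
        linarith
      · exact le_of_mul_le_mul_left h1 hpos
    have h2 : l * (((d : ℝ) - (n + 1 : ℕ)) * (c * q)) ≤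
        l * (((d : ℝ) - (n + 1 : ℕ)) * (Q * (n + 2 - l ^ (n + 1)))) := by gcongr
    refine hg.trans ((add_le_add_right h2 _).trans (le_of_eq ?_))
    push_cast
    field_simp
    ring

/-! ### The walk on `G_i` as a quadratic form -/

/-- The neighbours of `σ` are obtained by exchanging one vertex of `σ` for one outside. -/
lemma sum_neighbours (X : SC V d) (k : ℕ) (σ : Finset V) (hσ : σ.card = k)
    (H : Finset V → ℝ) :
    ∑ τ ∈ X.fc k, (((if σ ∪ τ ∈ X.fc (k + 1) then X.deg (σ ∪ τ) else 0 : ℕ) : ℝ) * H τ) =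
      ∑ v ∈ σ, ∑ u ∈ σᶜ, (X.deg (insert u σ) : ℝ) * H (insert u (σ.erase v)) := by
  have h1 : ∑ τ ∈ X.fc k, (((if σ ∪ τ ∈ X.fc (k + 1) then X.deg (σ ∪ τ) else 0 : ℕ) : ℝ) * H τ)
      = ∑ τ ∈ (lay V k).filter (fun τ => (σ ∪ τ).card = k + 1), (X.deg (σ ∪ τ) : ℝ) * H τ := by
    rw [Finset.sum_filter]
    refine (Finset.sum_subset (s₂ := lay V k) (fun τ hτ => ?_) fun τ hτ hn => ?_).trans
      (Finset.sum_congr rfl fun τ _ => ?_)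
    · exact mem_lay.2 (mem_filter.1 hτ).2
    · rw [if_neg]
      · simp
      · intro h
        exact hn (mem_filter.2 ⟨X.down_closed _ (mem_filter.1 h).1 _ Finset.subset_union_right,
          mem_lay.1 hτ⟩)
    · by_cases hf : σ ∪ τ ∈ X.faces
      · simp only [SC.fc, mem_filter, hf, true_and]
        split_ifs <;> simp
      · simp [SC.fc, hf, deg_eq_zero X hf]
  rw [h1, ← Finset.sum_product']
  symm
  have hun : ∀ v u, σ ∪ insert u (σ.erase v) = insert u σ := by
    intro v u
    ext w
    simp only [mem_union, mem_insert, mem_erase]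
    tauto
  refine Finset.sum_bij (fun p _ => insert p.2 (σ.erase p.1)) ?_ ?_ ?_ ?_
  · rintro ⟨v, u⟩ h
    simp only [mem_product, mem_compl] at h
    simp only [mem_filter, mem_lay, hun]
    rw [Finset.card_insert_of_notMem (fun hh => h.2 (Finset.mem_of_mem_erase hh)),
      Finset.card_erase_of_mem h.1, Finset.card_insert_of_notMem h.2, hσ]
    have := Finset.card_pos.2 ⟨v, h.1⟩
    omega
  · rintro ⟨v, u⟩ h ⟨v', u'⟩ h' heq
    simp only [mem_product, mem_compl] at h h'
    have e1 := Finset.ext_iff.1 heq u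
    have e2 := Finset.ext_iff.1 heq v
    simp only [mem_insert, mem_erase] at e1 e2
    have hu : u = u' := by
      rcases e1.1 (by simp) with h1 | h1
      · exact h1
      · exact absurd h1.2 h.2
    subst hu
    have hvu : v ≠ u := by rintro rfl; exact h.2 h.1
    have hv : v = v' := by
      by_contra hne
      rcases e2.2 (Or.inr ⟨hne, h.1⟩) with h1 | h1
      · exact hvu h1
      · exact h1.1 rfl
    rw [hv]
  · intro τ hτ
    simp only [mem_filter, mem_lay] at hτ
    have c1 : (τ \ σ).card = 1 := by
      have := Finset.card_sdiff_add_card τ σ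
      rw [Finset.union_comm] at this
      omega
    have c2 : (σ \ τ).card = 1 := by
      have := Finset.card_sdiff_add_card σ τ
      omega
    obtain ⟨u, hu⟩ := Finset.card_eq_one.1 c1
    obtain ⟨v, hv⟩ := Finset.card_eq_one.1 c2
    have eu : ∀ w, (w ∈ τ ∧ w ∉ σ) ↔ w = u := fun w => by
      rw [← mem_sdiff, hu, mem_singleton]
    have ev : ∀ w, (w ∈ σ ∧ w ∉ τ) ↔ w = v := fun w => by
      rw [← mem_sdiff, hv, mem_singleton]
    refine ⟨(v, u), ?_, ?_⟩
    · simp only [mem_product, mem_compl]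
      exact ⟨((ev v).2 rfl).1, ((eu u).2 rfl).2⟩
    · ext w
      have := eu w
      have := ev w
      simp only [mem_insert, mem_erase]
      tauto
  · rintro ⟨v, u⟩ _
    simp only [hun]

/-- A form on the adjacency counts of `G_i` is a `pairSum`; the non-faces in `lay` contribute `0`. -/
lemma sum_adjG (X : SC V d) (i : ℕ) (H : Finset V → Finset V → ℝ) :
    ∑ σ : {σ // σ ∈ X.fc (i + 1)}, ∑ τ : {σ // σ ∈ X.fc (i + 1)},
      (X.adjG i σ τ : ℝ) * H σ.1 τ.1 = pairSum X (i + 1) H := by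
  have h1 : ∀ σ : {σ // σ ∈ X.fc (i + 1)}, ∑ τ : {σ // σ ∈ X.fc (i + 1)},
      (X.adjG i σ τ : ℝ) * H σ.1 τ.1 = ∑ v ∈ σ.1, ∑ u ∈ σ.1ᶜ,
        (X.deg (insert u σ.1) : ℝ) * H σ.1 (insert u (σ.1.erase v)) := by
    intro σ
    rw [← sum_neighbours X (i + 1) σ.1 (mem_filter.1 σ.2).2 (H σ.1)]
    exact Finset.sum_coe_sort (X.fc (i + 1)) fun τ =>
      (((if σ.1 ∪ τ ∈ X.fc (i + 2) then X.deg (σ.1 ∪ τ) else 0 : ℕ) : ℝ) * H σ.1 τ)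
  simp only [h1]
  rw [Finset.sum_coe_sort (X.fc (i + 1)) fun σ => ∑ v ∈ σ, ∑ u ∈ σᶜ,
        (X.deg (insert u σ) : ℝ) * H σ (insert u (σ.erase v)), pairSum]
  refine Finset.sum_subset (fun σ hσ => mem_lay.2 (mem_filter.1 hσ).2) fun σ hσ hn => ?_
  refine Finset.sum_eq_zero fun v _ => Finset.sum_eq_zero fun u _ => ?_
  rw [deg_eq_zero X fun hf => hn (mem_filter.2
    ⟨X.down_closed _ hf _ (Finset.subset_insert _ _), mem_lay.1 hσ⟩)]
  simp

lemma adjG_symm (X : SC V d) (i : ℕ) (σ τ : {σ // σ ∈ X.fc (i + 1)}) :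
    X.adjG i σ τ = X.adjG i τ σ := by
  unfold SC.adjG
  rw [Finset.union_comm]

lemma mdeg_adjG (X : SC V d) (i : ℕ) (σ : {σ // σ ∈ X.fc (i + 1)}) :
    (mdeg (X.adjG i) σ : ℝ) = (i + 1) * ((d : ℝ) - i) * X.deg σ.1 := by
  have hc := (mem_filter.1 σ.2).2
  have h := sum_neighbours X (i + 1) σ.1 hc fun _ => 1
  simp only [mul_one] at h
  rw [Finset.sum_const, sum_deg_insert, hc, nsmul_eq_mul] at h
  have h2 := Finset.sum_coe_sort (X.fc (i + 1)) fun τ =>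
      (((if σ.1 ∪ τ ∈ X.fc (i + 2) then X.deg (σ.1 ∪ τ) else 0 : ℕ) : ℝ) * 1)
  simp only [mul_one] at h2
  rw [h] at h2
  rw [mdeg, Nat.cast_sum]
  refine Eq.trans h2 ?_
  push_cast
  ring

/-- Two-sided bound on the quadratic form of `G_i` on functions of mean zero: the upper bound is
the spectral gap, the lower bound the positivity of the up-down walk. -/
lemma adjG_form (X : SC V d) {α : ℝ} (hX : X.IsSkeletonExpander α) (hα0 : 0 ≤ α)
    (hα : α ≤ 1 / 2) (i : ℕ) (hi : i < d) (f : {σ // σ ∈ X.fc (i + 1)} → ℝ)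
    (hf : ∑ σ, (mdeg (X.adjG i) σ : ℝ) * f σ = 0) :
    ∑ σ, ∑ τ, (X.adjG i σ τ : ℝ) * (f σ * f τ) ≤
        (1 - ((1 / 2 - α) ^ 2 / 2) ^ (i + 1) / (i + 1)) *
          ∑ σ, (mdeg (X.adjG i) σ : ℝ) * f σ ^ 2 ∧
      -(1 / ((i : ℝ) + 1)) * ∑ σ, (mdeg (X.adjG i) σ : ℝ) * f σ ^ 2 ≤
        ∑ σ, ∑ τ, (X.adjG i σ τ : ℝ) * (f σ * f τ) := by
  let F : Finset V → ℝ := fun σ => if h : σ ∈ X.fc (i + 1) then f ⟨σ, h⟩ else 0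
  have hF : ∀ σ : {σ // σ ∈ X.fc (i + 1)}, F σ.1 = f σ := fun σ => by simp [F]
  have hdi : (0 : ℝ) < (d : ℝ) - i := by
    have : (i : ℝ) < d := by exact_mod_cast hi
    linarith
  have hsum : ∀ g : {σ // σ ∈ X.fc (i + 1)} → ℝ, ∀ G : Finset V → ℝ, (∀ σ, G σ.1 = g σ) →
      ∑ σ, (mdeg (X.adjG i) σ : ℝ) * g σ =
        (i + 1) * ((d : ℝ) - i) * ∑ σ ∈ lay V (i + 1), (X.deg σ : ℝ) * G σ := by
    intro g G hG
    have h1 : ∑ σ ∈ lay V (i + 1), (X.deg σ : ℝ) * G σ =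
        ∑ σ : {σ // σ ∈ X.fc (i + 1)}, (X.deg σ.1 : ℝ) * G σ.1 := by
      rw [Finset.sum_coe_sort (X.fc (i + 1)) fun σ => (X.deg σ : ℝ) * G σ]
      symm
      refine Finset.sum_subset (fun σ hσ => mem_lay.2 (mem_filter.1 hσ).2) fun σ hσ hn => ?_
      rw [deg_eq_zero X fun hf => hn (mem_filter.2 ⟨hf, mem_lay.1 hσ⟩)]
      simp
    rw [h1, Finset.mul_sum]
    refine Finset.sum_congr rfl fun σ _ => ?_
    rw [mdeg_adjG, hG]
    ring
  have hB : ∑ σ, ∑ τ, (X.adjG i σ τ : ℝ) * (f σ * f τ) =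
      pairSum X (i + 1) fun σ τ => F σ * F τ := by
    rw [← sum_adjG]
    simp only [hF]
  rw [hsum f F hF] at hf
  rw [hB, hsum (fun σ => f σ ^ 2) (fun σ => F σ ^ 2) fun σ => by rw [hF]]
  have hM : ∑ σ ∈ lay V (i + 1), (X.deg σ : ℝ) * F σ = 0 := by
    have : (i + 1) * ((d : ℝ) - i) ≠ 0 := by positivity
    exact (mul_eq_zero.1 hf).resolve_left this
  refine ⟨spectral_gap X hX hα0 hα i hi F hM, ?_⟩
  refine le_trans (le_of_eq ?_) (pairSum_lower X (i + 1) F)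
  push_cast
  field_simp
  ring

end Faces

/-! ### From quadratic forms to mixing -/

section Mixing

variable {U : Type} [Fintype U]

/-- A bound on the quadratic form of the (self-adjoint) transition operator on the functions of
mean zero bounds its operator norm there, by polarization. -/
lemma contraction (A : U → U → ℕ) (hs : ∀ u v, A u v = A v u)
    (μ : ℝ) (hμ : 0 < μ)
    (hform : ∀ f : U → ℝ, ∑ v, (mdeg A v : ℝ) * f v = 0 →
      |∑ u, ∑ v, (A u v : ℝ) * (f u * f v)| ≤ μ * ∑ v, (mdeg A v : ℝ) * f v ^ 2)
    (f g : U → ℝ) (hf : ∑ v, (mdeg A v : ℝ) * f v = 0)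
    (hg : ∀ v, (mdeg A v : ℝ) * g v = ∑ u, (A v u : ℝ) * f u) :
    ∑ v, (mdeg A v : ℝ) * g v = 0 ∧
      ∑ v, (mdeg A v : ℝ) * g v ^ 2 ≤ μ ^ 2 * ∑ v, (mdeg A v : ℝ) * f v ^ 2 := by
  have hg0 : ∑ v, (mdeg A v : ℝ) * g v = 0 := by
    simp only [hg]
    rw [Finset.sum_comm, ← hf]
    refine Finset.sum_congr rfl fun u _ => ?_
    rw [← Finset.sum_mul, mdeg, Nat.cast_sum]
    congr 1
    exact Finset.sum_congr rfl fun v _ => by rw [hs]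
  refine ⟨hg0, ?_⟩
  have hlin : ∀ s : ℝ, ∑ v, (mdeg A v : ℝ) * (μ * f v + s * g v) = 0 := by
    intro s
    have : ∑ v, (mdeg A v : ℝ) * (μ * f v + s * g v) =
        μ * ∑ v, (mdeg A v : ℝ) * f v + s * ∑ v, (mdeg A v : ℝ) * g v := by
      rw [Finset.mul_sum, Finset.mul_sum, ← Finset.sum_add_distrib]
      exact Finset.sum_congr rfl fun v _ => by ring
    rw [this, hf, hg0]; simp
  have h1 := (abs_le.1 (hform _ (hlin 1))).2
  have h2 := (abs_le.1 (hform _ (hlin (-1)))).1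
  have hN : ∀ s : ℝ, ∑ v, (mdeg A v : ℝ) * (μ * f v + s * g v) ^ 2 =
      μ ^ 2 * ∑ v, (mdeg A v : ℝ) * f v ^ 2 + 2 * μ * s * ∑ v, (mdeg A v : ℝ) * (f v * g v) +
        s ^ 2 * ∑ v, (mdeg A v : ℝ) * g v ^ 2 := by
    intro s
    simp only [Finset.mul_sum, ← Finset.sum_add_distrib]
    exact Finset.sum_congr rfl fun v _ => by ring
  have hcross : ∑ u, ∑ v, (A u v : ℝ) * (g u * f v) = ∑ v, (mdeg A v : ℝ) * g v ^ 2 := by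
    refine Finset.sum_congr rfl fun u _ => ?_
    calc ∑ v, (A u v : ℝ) * (g u * f v) = g u * ∑ v, (A u v : ℝ) * f v := by
          rw [Finset.mul_sum]; exact Finset.sum_congr rfl fun v _ => by ring
      _ = _ := by rw [← hg]; ring
  have hcross' : ∑ u, ∑ v, (A u v : ℝ) * (f u * g v) = ∑ v, (mdeg A v : ℝ) * g v ^ 2 := by
    rw [← hcross, Finset.sum_comm]
    refine Finset.sum_congr rfl fun u _ => Finset.sum_congr rfl fun v _ => ?_
    rw [hs]; ring
  have hB : ∀ s : ℝ, ∑ u, ∑ v, (A u v : ℝ) * ((μ * f u + s * g u) * (μ * f v + s * g v)) =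
      μ ^ 2 * ∑ u, ∑ v, (A u v : ℝ) * (f u * f v) +
        2 * μ * s * ∑ v, (mdeg A v : ℝ) * g v ^ 2 +
        s ^ 2 * ∑ u, ∑ v, (A u v : ℝ) * (g u * g v) := by
    intro s
    have : 2 * μ * s * ∑ v, (mdeg A v : ℝ) * g v ^ 2 =
        μ * s * ∑ u, ∑ v, (A u v : ℝ) * (f u * g v) +
          μ * s * ∑ u, ∑ v, (A u v : ℝ) * (g u * f v) := by
      rw [hcross, hcross']; ring
    rw [this]
    simp only [Finset.mul_sum, ← Finset.sum_add_distrib]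
    exact Finset.sum_congr rfl fun u _ => Finset.sum_congr rfl fun v _ => by ring
  rw [hN, hB] at h1 h2
  set NG := ∑ v, (mdeg A v : ℝ) * g v ^ 2
  set NF := ∑ v, (mdeg A v : ℝ) * f v ^ 2
  have : μ * NG ≤ μ * (μ ^ 2 * NF) := by nlinarith
  exact le_of_mul_le_mul_left this hμ

lemma mdeg_le_dmaxDeg (A : U → U → ℕ) (v : U) : mdeg A v ≤ dmaxDeg A :=
  le_ciSup (Set.finite_range _).bddAbove v

lemma dminDeg_le_mdeg (A : U → U → ℕ) (v : U) : dminDeg A ≤ mdeg A v :=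
  ciInf_le (OrderBot.bddBelow _) v

lemma dminDeg_pos [Nonempty U] (A : U → U → ℕ) (hpos : ∀ u, 0 < mdeg A u) :
    0 < dminDeg A := by
  obtain ⟨v, hv⟩ := Nat.sInf_mem (Set.range_nonempty (mdeg A))
  have : dminDeg A = mdeg A v := hv.symm
  rw [this]; exact hpos v

/-- A reversible walk whose quadratic form on functions of mean zero is bounded by `μ` in absolute
value is `μ`-rapidly mixing. -/
lemma rapidMixing_of_form [DecidableEq U] (A : U → U → ℕ) (hs : ∀ u v, A u v = A v u)
    (hpos : ∀ u, 0 < mdeg A u) (μ : ℝ) (hμ : 0 < μ)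
    (hform : ∀ f : U → ℝ, ∑ v, (mdeg A v : ℝ) * f v = 0 →
      |∑ u, ∑ v, (A u v : ℝ) * (f u * f v)| ≤ μ * ∑ v, (mdeg A v : ℝ) * f v ^ 2) :
    IsRapidMixing A μ := by
  intro π0 h0 h1 t
  have hU : Nonempty U := by
    by_contra hne
    rw [not_nonempty_iff] at hne
    simp at h1
  have hposR : ∀ v, (0 : ℝ) < mdeg A v := fun v => by exact_mod_cast hpos v
  have hmin : (0 : ℝ) < dminDeg A := by exact_mod_cast dminDeg_pos A hpos
  have hvol : 0 < ∑ u, (mdeg A u : ℝ) := Finset.sum_pos (fun v _ => hposR v) univ_nonempty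
  have hstat : ∑ v, statDist A v = 1 := by
    simp only [statDist]
    rw [← Finset.sum_div, div_self hvol.ne']
  -- the density of the deviation from stationarity
  let f : ℕ → U → ℝ := fun t v =>
    (Matrix.vecMul π0 (transition A ^ t) v - statDist A v) / mdeg A v
  have hfd : ∀ t v, (mdeg A v : ℝ) * f t v =
      Matrix.vecMul π0 (transition A ^ t) v - statDist A v := by
    intro t v
    have := (hposR v).ne'
    simp only [f]; field_simp
  have hstep : ∀ t v, (mdeg A v : ℝ) * f (t + 1) v = ∑ u, (A v u : ℝ) * f t u := by
    intro t v
    rw [hfd, pow_succ, ← Matrix.vecMul_vecMul]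
    have e1 : Matrix.vecMul (Matrix.vecMul π0 (transition A ^ t)) (transition A) v =
        ∑ u, (A v u : ℝ) * f t u + ∑ u, (A v u : ℝ) / ∑ u, (mdeg A u : ℝ) := by
      rw [Matrix.vecMul, dotProduct, ← Finset.sum_add_distrib]
      refine Finset.sum_congr rfl fun u _ => ?_
      have e2 : Matrix.vecMul π0 (transition A ^ t) u =
          (mdeg A u : ℝ) * f t u + statDist A u := by rw [hfd]; ring
      have := (hposR u).ne'
      rw [e2]
      simp only [transition, Matrix.of_apply, statDist]
      rw [hs u v]
      field_simp
    rw [e1, ← Finset.sum_div]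
    simp only [statDist]
    rw [show (mdeg A v : ℝ) = ∑ u, (A v u : ℝ) by rw [mdeg, Nat.cast_sum]]
    ring
  have hzero : ∑ v, (mdeg A v : ℝ) * f 0 v = 0 := by
    simp only [hfd, pow_zero, Matrix.vecMul_one]
    rw [Finset.sum_sub_distrib, h1, hstat, sub_self]
  have hinit : ∑ v, (mdeg A v : ℝ) * f 0 v ^ 2 ≤ 1 / dminDeg A := by
    set D := ∑ u, (mdeg A u : ℝ) with hD
    have e1 : ∑ v, (mdeg A v : ℝ) * f 0 v ^ 2 = ∑ v, π0 v ^ 2 / mdeg A v - 1 / D := by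
      have : ∑ v, (mdeg A v : ℝ) * f 0 v ^ 2 =
          ∑ v, (π0 v ^ 2 / mdeg A v - 2 / D * π0 v + 1 / D * statDist A v) := by
        refine Finset.sum_congr rfl fun v _ => ?_
        have := (hposR v).ne'
        simp only [f, pow_zero, Matrix.vecMul_one, statDist, ← hD]
        field_simp
        ring
      rw [this, Finset.sum_add_distrib, Finset.sum_sub_distrib, ← Finset.mul_sum,
        ← Finset.mul_sum, h1, hstat]
      ring
    have e2 : ∑ v, π0 v ^ 2 / mdeg A v ≤ ∑ v, π0 v * (1 / dminDeg A) := by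
      refine Finset.sum_le_sum fun v _ => ?_
      have hle : π0 v ≤ 1 := by
        rw [← h1]; exact Finset.single_le_sum (fun u _ => h0 u) (mem_univ v)
      rw [mul_one_div]
      have : (dminDeg A : ℝ) ≤ mdeg A v := by exact_mod_cast dminDeg_le_mdeg A v
      have hv := h0 v
      refine div_le_div₀ hv ?_ hmin this
      nlinarith
    rw [← Finset.sum_mul, h1, one_mul] at e2
    have : 0 ≤ 1 / D := by positivity
    linarith
  have hmain : ∀ t, ∑ v, (mdeg A v : ℝ) * f t v = 0 ∧
      ∑ v, (mdeg A v : ℝ) * f t v ^ 2 ≤ (μ ^ t) ^ 2 * (1 / dminDeg A) := by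
    intro t
    induction t with
    | zero => exact ⟨hzero, by simpa using hinit⟩
    | succ t ih =>
      have hc := contraction A hs μ hμ hform (f t) (f (t + 1)) ih.1 (hstep t)
      refine ⟨hc.1, hc.2.trans ?_⟩
      calc μ ^ 2 * ∑ v, (mdeg A v : ℝ) * f t v ^ 2
          ≤ μ ^ 2 * ((μ ^ t) ^ 2 * (1 / dminDeg A)) :=
            mul_le_mul_of_nonneg_left ih.2 (sq_nonneg _)
        _ = _ := by ring
  have hfin : ∑ v, (Matrix.vecMul π0 (transition A ^ t) v - statDist A v) ^ 2 ≤
      (dmaxDeg A : ℝ) / dminDeg A * (μ ^ t) ^ 2 := by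
    calc ∑ v, (Matrix.vecMul π0 (transition A ^ t) v - statDist A v) ^ 2
        ≤ ∑ v, (dmaxDeg A : ℝ) * ((mdeg A v : ℝ) * f t v ^ 2) := by
          refine Finset.sum_le_sum fun v _ => ?_
          rw [← hfd t v]
          have : (mdeg A v : ℝ) ≤ dmaxDeg A := by exact_mod_cast mdeg_le_dmaxDeg A v
          have h2 : 0 ≤ (mdeg A v : ℝ) * f t v ^ 2 := by positivity
          calc ((mdeg A v : ℝ) * f t v) ^ 2 = (mdeg A v : ℝ) * ((mdeg A v : ℝ) * f t v ^ 2) := by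
                ring
            _ ≤ _ := mul_le_mul_of_nonneg_right this h2
      _ ≤ (dmaxDeg A : ℝ) * ((μ ^ t) ^ 2 * (1 / dminDeg A)) := by
          rw [← Finset.mul_sum]
          exact mul_le_mul_of_nonneg_left (hmain t).2 (by positivity)
      _ = _ := by ring
  calc Real.sqrt (∑ v, (Matrix.vecMul π0 (transition A ^ t) v - statDist A v) ^ 2)
      ≤ Real.sqrt ((dmaxDeg A : ℝ) / dminDeg A * (μ ^ t) ^ 2) := Real.sqrt_le_sqrt hfin
    _ = _ := by
      rw [Real.sqrt_mul (by positivity), Real.sqrt_sq (by positivity)]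

lemma mdeg_lazy [DecidableEq U] (A : U → U → ℕ) (v : U) : mdeg (lazy A) v = 2 * mdeg A v := by
  simp only [mdeg, lazy, Finset.sum_add_distrib]
  simp
  ring

lemma form_lazy [DecidableEq U] (A : U → U → ℕ) (f : U → ℝ) :
    ∑ u, ∑ v, (lazy A u v : ℝ) * (f u * f v) =
      ∑ u, ∑ v, (A u v : ℝ) * (f u * f v) + ∑ u, (mdeg A u : ℝ) * f u ^ 2 := by
  rw [← Finset.sum_add_distrib]
  refine Finset.sum_congr rfl fun u _ => ?_
  simp only [lazy, Nat.cast_add, add_mul, Finset.sum_add_distrib]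
  simp [sq]

end Mixing

/-- The gap in the theorem is at most the gap supplied by the local-to-global argument. -/
lemma rate_le (i : ℕ) (α : ℝ) (hα0 : 0 < α)
    (hα : α < ((2 : ℝ) ^ ((1 : ℝ) / 2 ^ (i + 1)) - 1) / Real.sqrt 2) :
    α ≤ 1 / 2 ∧
    1 / (2 * ((i : ℝ) + 2) ^ 2) *
      (((2 : ℝ) ^ ((1 : ℝ) / 2 ^ (i + 1)) - 1 - Real.sqrt 2 * α) /
        (2 * Real.sqrt 2 * ((i : ℝ) + 1))) ^ (2 * (i + 1)) ≤
      ((1 / 2 - α) ^ 2 / 2) ^ (i + 1) / (i + 1) / 2 ∧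
    1 / (2 * ((i : ℝ) + 2) ^ 2) *
      (((2 : ℝ) ^ ((1 : ℝ) / 2 ^ (i + 1)) - 1 - Real.sqrt 2 * α) /
        (2 * Real.sqrt 2 * ((i : ℝ) + 1))) ^ (2 * (i + 1)) ≤ 1 / 2 := by
  set s := Real.sqrt 2 with hs
  have hs2 : s ^ 2 = 2 := Real.sq_sqrt (by norm_num)
  have hs0 : 0 < s := by positivity
  have hp : (2 : ℝ) ^ ((1 : ℝ) / 2 ^ (i + 1)) ≤ s := by
    rw [hs, Real.sqrt_eq_rpow]
    apply Real.rpow_le_rpow_of_exponent_le (by norm_num)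
    apply one_div_le_one_div_of_le (by norm_num)
    exact le_self_pow₀ (by norm_num) (by omega)
  set p := (2 : ℝ) ^ ((1 : ℝ) / 2 ^ (i + 1))
  have hnum0 : 0 < p - 1 - s * α := by
    rw [lt_div_iff₀ hs0] at hα; nlinarith
  have hs15 : s ≤ 3 / 2 := by nlinarith
  -- `√2 - 1 ≤ √2 / 2`
  have hnum : p - 1 - s * α ≤ s * (1 / 2 - α) := by nlinarith
  have hh : 0 < 1 / 2 - α := by
    have : 0 < s * (1 / 2 - α) := by linarith
    exact (mul_pos_iff_of_pos_left hs0).1 this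
  set ε := (p - 1 - s * α) / (2 * s * ((i : ℝ) + 1)) with hε
  have hi0 : (0 : ℝ) ≤ i := Nat.cast_nonneg i
  have hε0 : 0 ≤ ε := by positivity
  have hεle : ε ≤ (1 / 2 - α) / 2 := by
    rw [hε, div_le_iff₀ (by positivity)]
    have : 0 ≤ s * (1 / 2 - α) * i := by positivity
    nlinarith
  have hsq : ε ^ 2 ≤ (1 / 2 - α) ^ 2 / 2 := by nlinarith
  have hpow : ε ^ (2 * (i + 1)) ≤ ((1 / 2 - α) ^ 2 / 2) ^ (i + 1) := by
    rw [pow_mul]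
    exact pow_le_pow_left₀ (sq_nonneg _) hsq _
  have hone : ((1 / 2 - α) ^ 2 / 2) ^ (i + 1) ≤ 1 :=
    pow_le_one₀ (by positivity) (by nlinarith)
  have hpos : 0 ≤ ε ^ (2 * (i + 1)) := by positivity
  have hc : 1 / (2 * ((i : ℝ) + 2) ^ 2) ≤ 1 / ((i : ℝ) + 1) / 2 := by
    rw [div_div]
    exact one_div_le_one_div_of_le (by positivity) (by nlinarith)
  have hc' : 1 / (2 * ((i : ℝ) + 2) ^ 2) ≤ 1 / 2 :=
    one_div_le_one_div_of_le (by norm_num) (by nlinarith)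
  refine ⟨by linarith, ?_, ?_⟩
  · calc _ ≤ 1 / ((i : ℝ) + 1) / 2 * ((1 / 2 - α) ^ 2 / 2) ^ (i + 1) :=
          mul_le_mul hc hpow hpos (by positivity)
      _ = _ := by ring
  · calc _ ≤ 1 / 2 * (1 : ℝ) := mul_le_mul hc' (hpow.trans hone) hpos (by norm_num)
      _ = _ := by ring

/-- **Stronger rapid mixing.** If `X` is a pure `d`-dimensional `α`-skeleton expander with
`d > 1`, then for every `0 ≤ i < d` with `α < (2^(1/2^(i+1)) − 1)/√2`, the high order
random walk on dimension `i` of `X` (taken lazy for `i = 0`) is `μ`-rapidly mixing for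
`μ = 1 − (1/(2(i+2)²)) ((2^(1/2^(i+1)) − 1 − √2 α)/(2√2 (i+1)))^(2(i+1))`. -/
theorem statement11 {V : Type} [DecidableEq V] [Fintype V] {d : ℕ} (X : SC V d)
    (hd : 1 < d) (α : ℝ) (hα0 : 0 < α) (hX : X.IsSkeletonExpander α) :
    (α < ((2 : ℝ) ^ ((1 : ℝ) / 2 ^ (0 + 1 : ℕ)) - 1) / Real.sqrt 2 →
      IsRapidMixing (lazy (X.adjG 0))
        (1 - 1 / (2 * ((0 : ℝ) + 2) ^ 2) *
          (((2 : ℝ) ^ ((1 : ℝ) / 2 ^ (0 + 1 : ℕ)) - 1 - Real.sqrt 2 * α) /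
              (2 * Real.sqrt 2 * ((0 : ℝ) + 1))) ^ (2 * (0 + 1)))) ∧
      ∀ i : ℕ, 0 < i → i < d →
        α < ((2 : ℝ) ^ ((1 : ℝ) / 2 ^ (i + 1)) - 1) / Real.sqrt 2 →
        IsRapidMixing (X.adjG i)
          (1 - 1 / (2 * ((i : ℝ) + 2) ^ 2) *
            (((2 : ℝ) ^ ((1 : ℝ) / 2 ^ (i + 1)) - 1 - Real.sqrt 2 * α) /
                (2 * Real.sqrt 2 * ((i : ℝ) + 1))) ^ (2 * (i + 1))) := by
  have hdeg : ∀ i : ℕ, i < d → ∀ σ, 0 < mdeg (X.adjG i) σ := by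
    intro i hi σ
    have h1 : (0 : ℝ) < (d : ℝ) - i := by
      have : (i : ℝ) < d := by exact_mod_cast hi
      linarith
    have h2 : (0 : ℝ) < X.deg σ.1 := by
      exact_mod_cast deg_pos X (mem_filter.1 σ.2).1
    have h3 : (0 : ℝ) < mdeg (X.adjG i) σ := by
      rw [mdeg_adjG]; positivity
    exact_mod_cast h3
  have hN : ∀ (i : ℕ) (f : {σ // σ ∈ X.fc (i + 1)} → ℝ),
      0 ≤ ∑ σ, (mdeg (X.adjG i) σ : ℝ) * f σ ^ 2 := fun i f =>
    Finset.sum_nonneg fun σ _ => by positivity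
  constructor
  · intro hα
    obtain ⟨ha, hg, hh⟩ := rate_le 0 α hα0 hα
    rw [Nat.cast_zero] at hg hh
    refine rapidMixing_of_form _ (fun u v => ?_) (fun u => ?_) _ (by linarith) fun f hf => ?_
    · unfold lazy
      rw [adjG_symm]
      by_cases h : u = v
      · subst h; rfl
      · rw [if_neg h, if_neg (Ne.symm h)]
    · rw [mdeg_lazy]
      have := hdeg 0 (by omega) u
      omega
    · have htwo : ∀ g : {σ // σ ∈ X.fc (0 + 1)} → ℝ,
          ∑ σ, (mdeg (lazy (X.adjG 0)) σ : ℝ) * g σ =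
            2 * ∑ σ, (mdeg (X.adjG 0) σ : ℝ) * g σ := by
        intro g
        simp only [mdeg_lazy, Nat.cast_mul, Nat.cast_ofNat, mul_assoc, Finset.mul_sum]
      rw [htwo] at hf ⊢
      obtain ⟨h1, h2⟩ := adjG_form X hX hα0.le ha 0 (by omega) f (by linarith)
      rw [Nat.cast_zero] at h1 h2
      rw [form_lazy]
      have hN0 := hN 0 f
      set N := ∑ σ, (mdeg (X.adjG 0) σ : ℝ) * f σ ^ 2
      have h3 := mul_le_mul_of_nonneg_right hg hN0
      rw [abs_of_nonneg (by linarith)]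
      linarith
  · intro i hi hid hα
    obtain ⟨ha, hg, hh⟩ := rate_le i α hα0 hα
    refine rapidMixing_of_form _ (adjG_symm X i) (hdeg i hid) _ (by linarith) fun f hf => ?_
    obtain ⟨h1, h2⟩ := adjG_form X hX hα0.le ha i hid f hf
    have hN0 := hN i f
    have hgap : 0 ≤ ((1 / 2 - α) ^ 2 / 2) ^ (i + 1) / ((i : ℝ) + 1) := by positivity
    -- the least eigenvalue is at least `-1 / (i + 1) ≥ -1 / 2`
    have hlow : 1 / ((i : ℝ) + 1) ≤ 1 / 2 := by
      have : (1 : ℝ) ≤ i := by exact_mod_cast hi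
      exact one_div_le_one_div_of_le (by norm_num) (by linarith)
    refine abs_le.2 ⟨le_trans ?_ h2, h1.trans ?_⟩
    · rw [← neg_mul]
      exact mul_le_mul_of_nonneg_right (by linarith) hN0
    · exact mul_le_mul_of_nonneg_right (by linarith) hN0
end
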